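/- arXiv:2408.16488 — 6 statements merged into one kernel-verified Lean document; each statement's English description precedes it below -/
import Mathlib

section
/- A homogeneous polynomial f of degree 3 in MvPolynomial (Fin 3) ℂ vanishes at all nine vectors t_{i,j}, (i,j) ∈ 𝔽₃ × 𝔽₃, if and only if f belongs to the Hesse pencil L, i.e., f = α·(x₀³+x₁³+x₂³) + β·x₀x₁x₂ for some α, β ∈ ℂ. -/
open MvPolynomial

/-- The nine flexes `t_{i,j}` of the Hesse configuration, indexed by `𝔽₃ × 𝔽₃`:
`t_{0,j} = (0, −εʲ, 1)`, `t_{1,j} = (1, 0, −εʲ)`, `t_{2,j} = (−εʲ, 1, 0)`. -/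
noncomputable def tpt (ε : ℂ) (ij : ZMod 3 × ZMod 3) : Fin 3 → ℂ :=
  ![![0, -(ε ^ ij.2.val), 1], ![1, 0, -(ε ^ ij.2.val)], ![-(ε ^ ij.2.val), 1, 0]]
    ⟨ij.1.val, ZMod.val_lt ij.1⟩

/-!
The nine points lie three by three on the edges `xᵢ = 0` of the coordinate triangle. Subtract from
`f` the multiple of the Fermat cubic having the same value at the vertex `(1, 0, 0)`. On an edge
through this vertex the difference is a binary cubic with four zeros, hence it is zero there and
also vanishes at the other vertex of the edge. Going around the triangle, the difference vanishes
on all three edges, so every monomial in it involves all three variables; being cubic, it is a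
multiple of `x₀x₁x₂`.
-/

lemma eq_single_add_single_of_forall_eq_zero {σ M : Type*} [AddZeroClass M] {j k : σ}
    (hjk : j ≠ k) {d : σ →₀ M} (hd : ∀ l, l ≠ j → l ≠ k → d l = 0) :
    d = Finsupp.single j (d j) + Finsupp.single k (d k) := by
  ext l
  by_cases hj : l = j
  · subst hj
    simp [hjk]
  · by_cases hk : l = k
    · subst hk
      simp [hjk]
    · simp [hd l hj hk, Ne.symm hj, Ne.symm hk]

section Edge

variable {σ R : Type*} [DecidableEq σ]

section CommSemiring

variable [CommSemiring R] {n : ℕ} {j k : σ}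

/-- The point `t eⱼ + eₖ` of the edge joining the coordinate vertices `eⱼ` and `eₖ`; over a
field, `t` is an affine coordinate on this projective line away from the vertex `eⱼ`. -/
def edgePoint (j k : σ) (t : R) : σ → R :=
  Pi.single j t + Pi.single k 1

lemma edgePoint_apply_left (hjk : j ≠ k) (t : R) : edgePoint j k t j = t := by
  simp [edgePoint, hjk]

lemma edgePoint_apply_right (hjk : j ≠ k) (t : R) : edgePoint j k t k = 1 := by
  simp [edgePoint, hjk.symm]

lemma edgePoint_apply_of_ne {l : σ} (hj : l ≠ j) (hk : l ≠ k) (t : R) :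
    edgePoint j k t l = 0 := by
  simp [edgePoint, hj, hk]

/-- Restriction of polynomials to the edge joining `eⱼ` and `eₖ`, dehomogenized by setting the
`k`-th variable to `1`. -/
noncomputable def edgeRestriction (j k : σ) : MvPolynomial σ R →ₐ[R] Polynomial R :=
  aeval (edgePoint j k Polynomial.X)

lemma eval_edgeRestriction (j k : σ) (f : MvPolynomial σ R) (t : R) :
    (edgeRestriction j k f).eval t = eval (edgePoint j k t) f := by
  have eval_point : (fun l ↦ Polynomial.aeval t (edgePoint j k Polynomial.X l : Polynomial R)) =
      edgePoint j k t := by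
    funext l
    simp [edgePoint, Pi.single_apply, apply_ite (Polynomial.eval t)]
  rw [edgeRestriction, ← Polynomial.coe_aeval_eq_eval, comp_aeval_apply, eval_point, aeval_eq_eval]

lemma edgeRestriction_monomial_add (hjk : j ≠ k) (a b : ℕ) (r : R) :
    edgeRestriction j k (monomial (Finsupp.single j a + Finsupp.single k b) r) =
      Polynomial.monomial a r := by
  rw [edgeRestriction, aeval_monomial, Finsupp.prod_add_index' (by simp) (by simp [pow_add]),
    Finsupp.prod_single_index (by simp), Finsupp.prod_single_index (by simp),
    edgePoint_apply_left hjk, edgePoint_apply_right hjk, one_pow, mul_one,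
    Polynomial.algebraMap_eq, Polynomial.C_mul_X_pow_eq_monomial]

lemma edgeRestriction_monomial_eq_zero {d : σ →₀ ℕ} {l : σ} (hj : l ≠ j) (hk : l ≠ k)
    (hl : d l ≠ 0) (r : R) : edgeRestriction j k (monomial d r) = 0 := by
  have hfactor : edgePoint j k (Polynomial.X : Polynomial R) l ^ d l = 0 := by
    rw [edgePoint_apply_of_ne hj hk, zero_pow hl]
  rw [edgeRestriction, aeval_monomial, Finsupp.prod,
    Finset.prod_eq_zero (Finsupp.mem_support_iff.mpr hl) hfactor, mul_zero]

lemma natDegree_edgeRestriction_le {f : MvPolynomial σ R} (hf : f.IsHomogeneous n) (j k : σ) :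
    (edgeRestriction j k f).natDegree ≤ n := by
  have hdeg : ∀ l, (edgePoint j k Polynomial.X l : Polynomial R).natDegree ≤ 1 := fun l ↦ by
    simp only [edgePoint, Pi.add_apply, Pi.single_apply]
    split_ifs <;> compute_degree!
  simpa [edgeRestriction] using aeval_natDegree_le f hf.totalDegree_le _ hdeg

lemma coeff_edgeRestriction {f : MvPolynomial σ R} (hf : f.IsHomogeneous n) (hjk : j ≠ k)
    {a b : ℕ} (hab : a + b = n) :
    (edgeRestriction j k f).coeff a = coeff (Finsupp.single j a + Finsupp.single k b) f := by
  have other_monomials : ∀ d ∈ f.support, d ≠ Finsupp.single j a + Finsupp.single k b →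
      (edgeRestriction j k (monomial d (coeff d f))).coeff a = 0 := by
    intro d hd hne
    by_cases hsupp : ∀ l, l ≠ j → l ≠ k → d l = 0
    · have hd_eq := eq_single_add_single_of_forall_eq_zero hjk hsupp
      have hdeg : d j + d k = n := by
        have degree_d : d.degree = n := (hf.degree_eq_sum_deg_support hd).symm
        rw [hd_eq] at degree_d
        simpa using degree_d
      have hdj : d j ≠ a := by
        rintro rfl
        obtain rfl : d k = b := by omega
        exact hne hd_eq
      generalize coeff d f = r
      rw [hd_eq, edgeRestriction_monomial_add hjk, Polynomial.coeff_monomial_of_ne _ hdj.symm]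
    · push Not at hsupp
      obtain ⟨l, hj, hk, hl⟩ := hsupp
      rw [edgeRestriction_monomial_eq_zero hj hk hl, Polynomial.coeff_zero]
  conv_lhs => rw [f.as_sum, map_sum, Polynomial.finsetSum_coeff]
  rw [Finset.sum_eq_single _ other_monomials, edgeRestriction_monomial_add hjk,
    Polynomial.coeff_monomial_same]
  intro hnotMem
  rw [notMem_support_iff.mp hnotMem, monomial_zero, map_zero, Polynomial.coeff_zero]

end CommSemiring

/-- The vertex `eⱼ` is a zero at infinity: with it, the form has `n + 1` zeros on the edge. -/
lemma coeff_edge_eq_zero_of_eval_edgePoint_eq_zero [CommRing R] [IsDomain R] {n : ℕ} {j k : σ}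
    {f : MvPolynomial σ R} (hf : f.IsHomogeneous n) (hjk : j ≠ k) {s : Finset R} (hs : n ≤ s.card)
    (heval : ∀ t ∈ s, eval (edgePoint j k t) f = 0) (hvertex : coeff (Finsupp.single j n) f = 0)
    {a b : ℕ} (hab : a + b = n) :
    coeff (Finsupp.single j a + Finsupp.single k b) f = 0 := by
  have coeff_n : (edgeRestriction j k f).coeff n = 0 := by
    simpa [hvertex] using coeff_edgeRestriction hf hjk (add_zero n)
  have degree_lt : (edgeRestriction j k f).degree < n := by
    refine (Polynomial.degree_lt_iff_coeff_zero _ n).mpr fun m hm ↦ ?_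
    obtain rfl | hlt := hm.eq_or_lt
    · exact coeff_n
    · exact Polynomial.coeff_eq_zero_of_natDegree_lt
        ((natDegree_edgeRestriction_le hf j k).trans_lt hlt)
  have restriction_eq_zero : edgeRestriction j k f = 0 :=
    Polynomial.eq_zero_of_degree_lt_of_eval_finset_eq_zero s
      (degree_lt.trans_le (by exact_mod_cast hs))
      fun t ht ↦ (eval_edgeRestriction j k f t).trans (heval t ht)
  rw [← coeff_edgeRestriction hf hjk hab, restriction_eq_zero, Polynomial.coeff_zero]

end Edge

lemma coeff_eq_zero_of_eval_edgePoint_eq_zero {R : Type*} [CommRing R] [IsDomain R] {n : ℕ}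
    {f : MvPolynomial (Fin 3) R} (hf : f.IsHomogeneous n) {s : Finset R} (hs : n ≤ s.card)
    (heval : ∀ i, ∀ t ∈ s, eval (edgePoint (i + 1) (i + 2) t) f = 0)
    (hvertex : coeff (Finsupp.single 0 n) f = 0) {d : Fin 3 →₀ ℕ} {i : Fin 3} (hdi : d i = 0) :
    coeff d f = 0 := by
  have edge_ne : ∀ i : Fin 3, i + 1 ≠ i + 2 := by decide
  have edge (i : Fin 3) (hi : coeff (Finsupp.single (i + 1) n) f = 0) {a b : ℕ} (hab : a + b = n) :=
    coeff_edge_eq_zero_of_eval_edgePoint_eq_zero hf (edge_ne i) hs (heval i) hi hab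
  have vertex_one : coeff (Finsupp.single 1 n) f = 0 := by
    simpa using edge 2 hvertex (zero_add n)
  have vertex_two : coeff (Finsupp.single 2 n) f = 0 := by
    simpa using edge 0 vertex_one (zero_add n)
  have vertex (i : Fin 3) : coeff (Finsupp.single i n) f = 0 := by
    fin_cases i
    exacts [hvertex, vertex_one, vertex_two]
  by_cases hdeg : d.degree = n
  · have hd : d = Finsupp.single (i + 1) (d (i + 1)) + Finsupp.single (i + 2) (d (i + 2)) := by
      refine eq_single_add_single_of_forall_eq_zero (edge_ne i) fun l h₁ h₂ ↦ ?_
      obtain rfl : l = i := by omega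
      exact hdi
    rw [hd]
    refine edge i (vertex _) ?_
    rw [← hdeg, hd]
    simp
  · exact hf.coeff_eq_zero hdeg

lemma exists_eq_C_mul_prod_X_of_coeff_eq_zero {σ R : Type*} [Fintype σ] [CommSemiring R]
    {f : MvPolynomial σ R} (hf : f.IsHomogeneous (Fintype.card σ))
    (hcoeff : ∀ (d : σ →₀ ℕ) (i : σ), d i = 0 → coeff d f = 0) :
    ∃ r : R, f = C r * ∏ i, X i := by
  classical
  set u : σ →₀ ℕ := Finsupp.indicator Finset.univ fun _ _ ↦ 1 with hu
  have prod_X : ∏ i, (X i : MvPolynomial σ R) = monomial u 1 := by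
    simpa only [Pi.one_apply, pow_one] using prod_X_pow (R := R) (1 : σ → ℕ) Finset.univ
  refine ⟨coeff u f, ?_⟩
  rw [prod_X, C_mul_monomial, mul_one]
  ext d
  rw [coeff_monomial]
  split_ifs with hd
  · rw [hd]
  by_contra hne
  have degree_eq : d.degree = Fintype.card σ := by_contra fun h ↦ hne (hf.coeff_eq_zero h)
  have one_le (i : σ) : 1 ≤ d i := Nat.one_le_iff_ne_zero.mpr fun h ↦ hne (hcoeff d i h)
  have sum_eq : ∑ _i : σ, 1 = ∑ i, d i := by
    rw [← Finsupp.degree_eq_sum, degree_eq, Fintype.card_eq_sum_ones]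
  refine hd (Finsupp.ext fun i ↦ ?_)
  rw [hu, Finsupp.indicator_of_mem (Finset.mem_univ i)]
  exact (Finset.sum_eq_sum_iff_of_le fun i _ ↦ one_le i).mp sum_eq i (Finset.mem_univ i)

section HessePencil

variable {R : Type*} [CommRing R]

lemma eval_edgePoint_hesse_pencil {t : R} (ht : t ^ 3 = -1) (α β : R) (i : Fin 3) :
    eval (edgePoint (i + 1) (i + 2) t)
      (C α * (X 0 ^ 3 + X 1 ^ 3 + X 2 ^ 3) + C β * (X 0 * X 1 * X 2)) = 0 := by
  fin_cases i <;> simp [edgePoint, ht]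

lemma exists_eq_hesse_pencil_of_eval_edgePoint_eq_zero [IsDomain R] {f : MvPolynomial (Fin 3) R}
    (hf : f.IsHomogeneous 3) {s : Finset R} (hs : 3 ≤ s.card) (hcube : ∀ t ∈ s, t ^ 3 = -1)
    (heval : ∀ i, ∀ t ∈ s, eval (edgePoint (i + 1) (i + 2) t) f = 0) :
    ∃ α β : R, f = C α * (X 0 ^ 3 + X 1 ^ 3 + X 2 ^ 3) + C β * (X 0 * X 1 * X 2) := by
  set α := coeff (Finsupp.single 0 3) f with hα
  set fermat : MvPolynomial (Fin 3) R := X 0 ^ 3 + X 1 ^ 3 + X 2 ^ 3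
  have fermat_hom : (C α * fermat).IsHomogeneous 3 :=
    (((isHomogeneous_X_pow 0 3).add (isHomogeneous_X_pow 1 3)).add
      (isHomogeneous_X_pow 2 3)).C_mul α
  have sub_eval (i : Fin 3) (t : R) (ht : t ∈ s) :
      eval (edgePoint (i + 1) (i + 2) t) (f - C α * fermat) = 0 := by
    have fermat_eval : eval (edgePoint (i + 1) (i + 2) t) (C α * fermat) = 0 := by
      simpa only [C_0, zero_mul, add_zero] using eval_edgePoint_hesse_pencil (hcube t ht) α 0 i
    rw [map_sub, heval i t ht, fermat_eval, sub_zero]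
  have sub_vertex : coeff (Finsupp.single 0 3) (f - C α * fermat) = 0 := by
    simp [fermat, coeff_C_mul, coeff_X_pow, Finsupp.single_left_inj, hα]
  obtain ⟨β, hβ⟩ := exists_eq_C_mul_prod_X_of_coeff_eq_zero (hf.sub fermat_hom) fun d i hdi ↦
    coeff_eq_zero_of_eval_edgePoint_eq_zero (hf.sub fermat_hom) hs sub_eval sub_vertex hdi
  refine ⟨α, β, ?_⟩
  rw [← Fin.prod_univ_three, ← hβ, add_sub_cancel]

theorem vanishes_at_flexes_iff_mem_hesse_pencil_general [IsDomain R] {ε : R}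
    (hε : IsPrimitiveRoot ε 3) {f : MvPolynomial (Fin 3) R} (hf : f.IsHomogeneous 3) :
    (∀ i j : Fin 3, eval (edgePoint (i + 1) (i + 2) (-(ε ^ j.val))) f = 0) ↔
      ∃ α β : R, f = C α * (X 0 ^ 3 + X 1 ^ 3 + X 2 ^ 3) + C β * (X 0 * X 1 * X 2) := by
  have pow_three (j : Fin 3) : (-(ε ^ j.val)) ^ 3 = -1 := by
    rw [Odd.neg_pow (by decide), pow_right_comm, hε.pow_eq_one, one_pow]
  constructor
  · intro heval
    have injective : Function.Injective fun j : Fin 3 ↦ -(ε ^ j.val) := fun j k hjk ↦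
      Fin.ext (hε.pow_inj j.isLt k.isLt (neg_injective hjk))
    refine exists_eq_hesse_pencil_of_eval_edgePoint_eq_zero hf
      (s := Finset.univ.map ⟨_, injective⟩) (by simp) ?_ ?_
    · simpa using pow_three
    · simpa using heval
  · rintro ⟨α, β, rfl⟩ i j
    exact eval_edgePoint_hesse_pencil (pow_three j) α β i

end HessePencil

lemma tpt_eq_edgePoint (ε : ℂ) (i j : Fin 3) :
    tpt ε (i, j) = edgePoint (i + 1) (i + 2) (-(ε ^ j.val)) := by
  funext l
  fin_cases i <;> fin_cases l <;> simp [tpt, edgePoint] <;> rfl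

/-- A cubic form vanishes at all nine points `t_{i,j}` iff it belongs to the Hesse pencil
`{α(x₀³+x₁³+x₂³) + β·x₀x₁x₂}`. -/
theorem vanishes_at_flexes_iff_mem_hesse_pencil (ε : ℂ) (hε : IsPrimitiveRoot ε 3)
    (f : MvPolynomial (Fin 3) ℂ) (hdeg : f.IsHomogeneous 3) :
    (∀ ij : ZMod 3 × ZMod 3, eval (tpt ε ij) f = 0) ↔
      ∃ α β : ℂ,
        f = C α * ((X 0) ^ 3 + (X 1) ^ 3 + (X 2) ^ 3) + C β * (X 0 * X 1 * X 2) := by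
  rw [← vanishes_at_flexes_iff_mem_hesse_pencil_general hε hdeg, Prod.forall]
  simp only [← tpt_eq_edgePoint]
  rfl
end

section
/- Let α, β ∈ ℂ with α ≠ 0 and β³ ≠ −27·α³, and let f = α·(x₀³+x₁³+x₂³) + β·x₀x₁x₂ (a smooth member of the Hesse pencil). Then for every nonzero v ∈ ℂ³: f(v) = 0 and H_f(v) = 0 hold if and only if v = c·t_{i,j} for some nonzero c ∈ ℂ and some (i,j) ∈ 𝔽₃ × 𝔽₃. (The set of flexes of every smooth member of the Hesse pencil is exactly the nine points t_{i,j}.) -/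
/-!
The Hessian of a member of the Hesse pencil is again a member of the pencil, and for a smooth
member it is a different one. The flexes are therefore the common zeros of two members, that is,
the base points of the pencil, where `x₀³ + x₁³ + x₂³` and `x₀x₁x₂` both vanish. At such a point one
coordinate is zero, and the other two satisfy `y³ + z³ = 0`, which is a product of three linear
forms.
-/

open MvPolynomial

/-- The Hessian `H_f = det (∂²f/∂xᵢ∂xⱼ)` of a cubic form `f`. -/
noncomputable def hess (f : MvPolynomial (Fin 3) ℂ) : MvPolynomial (Fin 3) ℂ :=
  Matrix.det (Matrix.of fun i j : Fin 3 => pderiv i (pderiv j f))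

theorem sum_fin_three_eq_cyclic {M : Type*} [AddCommMonoid M] (f : Fin 3 → M) (i : Fin 3) :
    ∑ k, f k = f i + f (i + 1) + f (i + 2) := by
  rw [← Equiv.sum_comp (Equiv.addLeft i) f, Fin.sum_univ_three]
  simp

section CommRing

variable {R : Type*} [CommRing R]

/-- The Hessian determinant of a polynomial in finitely many variables over any commutative ring;
`hess` is the case of ternary forms over `ℂ`. -/
noncomputable def hessian {σ : Type*} [Fintype σ] [DecidableEq σ] (f : MvPolynomial σ R) :
    MvPolynomial σ R :=
  Matrix.det (Matrix.of fun i j => pderiv i (pderiv j f))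

/-- The member `α (x₀³ + x₁³ + x₂³) + β x₀x₁x₂` of the Hesse pencil. -/
noncomputable def hesseCubic (α β : R) : MvPolynomial (Fin 3) R :=
  C α * ((X 0) ^ 3 + (X 1) ^ 3 + (X 2) ^ 3) + C β * (X 0 * X 1 * X 2)

/-- The nine base points of the Hesse pencil: `tpt` over any commutative ring, written as the
cyclic shift by `i` of the point `(0, -εʲ, 1)`. -/
def hesseBasePoint (ε : R) (ij : Fin 3 × Fin 3) (k : Fin 3) : R :=
  ![0, -(ε ^ (ij.2 : ℕ)), 1] (k - ij.1)

theorem tpt_eq_hesseBasePoint (ε : ℂ) : tpt ε = hesseBasePoint ε := by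
  ext ⟨i, j⟩ k
  fin_cases i <;> fin_cases k <;> rfl

theorem eval_hesseCubic (α β : R) (v : Fin 3 → R) :
    eval v (hesseCubic α β) = α * ∑ k, v k ^ 3 + β * ∏ k, v k := by
  simp [hesseCubic, Fin.sum_univ_three, Fin.prod_univ_three]

theorem eval_hesseCubic_eq_zero_and_iff [NoZeroDivisors R] {α β γ δ : R}
    (h : α * δ - β * γ ≠ 0) (v : Fin 3 → R) :
    eval v (hesseCubic α β) = 0 ∧ eval v (hesseCubic γ δ) = 0 ↔
      ∑ k, v k ^ 3 = 0 ∧ ∏ k, v k = 0 := by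
  simp only [eval_hesseCubic]
  constructor
  · rintro ⟨h₁, h₂⟩
    constructor <;> refine (mul_eq_zero.1 ?_).resolve_left h
    · linear_combination δ * h₁ - β * h₂
    · linear_combination α * h₂ - γ * h₁
  · rintro ⟨hsum, hprod⟩
    simp [hsum, hprod]

theorem pderiv_pderiv_hesseCubic (α β : R) :
    (Matrix.of fun i j => pderiv i (pderiv j (hesseCubic α β))) =
      !![6 * C α * X 0, C β * X 2, C β * X 1;
        C β * X 2, 6 * C α * X 1, C β * X 0;
        C β * X 1, C β * X 0, 6 * C α * X 2] := by
  have pderiv_three (i : Fin 3) : pderiv i (3 : MvPolynomial (Fin 3) R) = 0 :=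
    (pderiv i).map_natCast 3
  ext1 i j
  fin_cases i <;> fin_cases j <;>
    simp [hesseCubic, pderiv_X, Pi.single_apply, pderiv_three, Derivation.leibniz_pow] <;> ring

theorem hessian_hesseCubic (α β : R) :
    hessian (hesseCubic α β) = hesseCubic (-6 * α * β ^ 2) (216 * α ^ 3 + 2 * β ^ 3) := by
  rw [hessian, pderiv_pderiv_hesseCubic, Matrix.det_fin_three]
  simp only [hesseCubic, Matrix.of_apply, Matrix.cons_val, map_add, map_mul, map_neg, map_pow,
    map_ofNat]
  ring

theorem eq_smul_hesseBasePoint_iff {ε c : R} {i j : Fin 3} {v : Fin 3 → R} :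
    v = c • hesseBasePoint ε (i, j) ↔
      v i = 0 ∧ v (i + 1) = -(ε ^ (j : ℕ)) * c ∧ v (i + 2) = c := by
  rw [funext_iff, ← (Equiv.addLeft i).forall_congr_right]
  simp [Fin.forall_fin_succ, hesseBasePoint, mul_comm]

end CommRing

section IsDomain

variable {R : Type*} [CommRing R] [IsDomain R]

theorem pow_add_pow_eq_zero_iff_of_isPrimitiveRoot {n : ℕ} {ε : R} (hε : IsPrimitiveRoot ε n)
    (hn : Odd n) {x y : R} :
    x ^ n + y ^ n = 0 ↔ ∃ j : Fin n, x = -(ε ^ (j : ℕ)) * y := by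
  have : NeZero n := ⟨hn.pos.ne'⟩
  constructor
  · rw [hε.pow_add_pow_eq_prod_add_mul x y hn, Finset.prod_eq_zero_iff]
    rintro ⟨ζ, hζ, hxy⟩
    obtain ⟨j, hj, rfl⟩ := hε.eq_pow_of_pow_eq_one ((Polynomial.mem_nthRootsFinset hn.pos 1).1 hζ)
    exact ⟨⟨j, hj⟩, by linear_combination hxy⟩
  · rintro ⟨j, rfl⟩
    simp [mul_pow, hn.neg_pow, pow_right_comm ε, hε.pow_eq_one]

theorem sum_cubes_eq_zero_and_prod_eq_zero_iff {ε : R} (hε : IsPrimitiveRoot ε 3)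
    {v : Fin 3 → R} (hv : v ≠ 0) :
    ∑ k, v k ^ 3 = 0 ∧ ∏ k, v k = 0 ↔
      ∃ (c : R) (ij : Fin 3 × Fin 3), c ≠ 0 ∧ v = c • hesseBasePoint ε ij := by
  calc ∑ k, v k ^ 3 = 0 ∧ ∏ k, v k = 0
    _ ↔ ∃ i, v i = 0 ∧ v (i + 1) ^ 3 + v (i + 2) ^ 3 = 0 := by
      simp only [Finset.prod_eq_zero_iff, Finset.mem_univ, true_and, ← exists_and_left]
      refine exists_congr fun i => and_comm.trans (and_congr_right fun hi => ?_)
      simp [sum_fin_three_eq_cyclic _ i, hi]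
    _ ↔ ∃ i j : Fin 3, v i = 0 ∧ v (i + 1) = -(ε ^ (j : ℕ)) * v (i + 2) := by
      simp only [pow_add_pow_eq_zero_iff_of_isPrimitiveRoot hε (by decide : Odd 3), exists_and_left]
    _ ↔ ∃ (c : R) (ij : Fin 3 × Fin 3), v = c • hesseBasePoint ε ij := by
      simp only [Prod.exists, eq_smul_hesseBasePoint_iff]
      constructor
      · rintro ⟨i, j, hi, hij⟩
        exact ⟨v (i + 2), i, j, hi, hij, rfl⟩
      · rintro ⟨_, i, j, hi, hij, rfl⟩
        exact ⟨i, j, hi, hij⟩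
    _ ↔ ∃ (c : R) (ij : Fin 3 × Fin 3), c ≠ 0 ∧ v = c • hesseBasePoint ε ij := by
      refine exists₂_congr fun c ij => (and_iff_right_of_imp ?_).symm
      rintro rfl rfl
      exact hv (zero_smul R _)

theorem flexes_of_smooth_hesse_member_general (h2 : (2 : R) ≠ 0) {ε : R}
    (hε : IsPrimitiveRoot ε 3) {α β : R} (hα : α ≠ 0) (hβ : β ^ 3 ≠ -27 * α ^ 3)
    {v : Fin 3 → R} (hv : v ≠ 0) :
    eval v (hesseCubic α β) = 0 ∧ eval v (hessian (hesseCubic α β)) = 0 ↔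
      ∃ (c : R) (ij : Fin 3 × Fin 3), c ≠ 0 ∧ v = c • hesseBasePoint ε ij := by
  have hdet : α * (216 * α ^ 3 + 2 * β ^ 3) - β * (-6 * α * β ^ 2) ≠ 0 := by
    have : 2 ^ 3 * α * (β ^ 3 - -27 * α ^ 3) ≠ 0 :=
      mul_ne_zero (mul_ne_zero (pow_ne_zero 3 h2) hα) (sub_ne_zero.2 hβ)
    convert this using 1
    ring
  rw [hessian_hesseCubic, eval_hesseCubic_eq_zero_and_iff hdet,
    sum_cubes_eq_zero_and_prod_eq_zero_iff hε hv]

end IsDomain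

/-- The set of flexes of every smooth member of the Hesse pencil consists exactly of the
nine points `t_{i,j}`: a nonzero `v` satisfies `f(v) = H_f(v) = 0` iff it is a nonzero
multiple of some `t_{i,j}`. -/
theorem flexes_of_smooth_hesse_member (ε : ℂ) (hε : IsPrimitiveRoot ε 3) (α β : ℂ)
    (hα : α ≠ 0) (hβ : β ^ 3 ≠ -27 * α ^ 3) :
    ∀ v : Fin 3 → ℂ, v ≠ 0 →
      ((eval v (C α * ((X 0) ^ 3 + (X 1) ^ 3 + (X 2) ^ 3) + C β * (X 0 * X 1 * X 2)) = 0 ∧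
          eval v (hess (C α * ((X 0) ^ 3 + (X 1) ^ 3 + (X 2) ^ 3)
            + C β * (X 0 * X 1 * X 2))) = 0) ↔
        ∃ (c : ℂ) (ij : ZMod 3 × ZMod 3), c ≠ 0 ∧ v = c • tpt ε ij) := by
  rw [tpt_eq_hesseBasePoint]
  exact fun v hv => flexes_of_smooth_hesse_member_general two_ne_zero hε hα hβ hv
end

section
/- Let l : ℂ³ → ℂ be a nonzero linear form and suppose that l(t_{i,j}) = 0 and l(t_{k,m}) = 0 for two distinct index pairs (i,j) ≠ (k,m) in 𝔽₃ × 𝔽₃. Then l is a nonzero scalar multiple of one of the twelve listed linear forms. (Every line in ℙ²(ℂ) containing two distinct flexes of the Hesse configuration is one of the twelve lines.) -/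
open MvPolynomial

/-- The coefficient vectors of the twelve linear forms of the Hesse configuration
(the irreducible factors of the four singular members of the Hesse pencil). -/
noncomputable def lform (ε : ℂ) : Fin 12 → Fin 3 → ℂ :=
  ![![1, 0, 0], ![0, 1, 0], ![0, 0, 1],
    ![1, 1, 1], ![1, ε, ε ^ 2], ![1, ε ^ 2, ε],
    ![1, 1, ε], ![1, ε, 1], ![1, ε ^ 2, ε ^ 2],
    ![1, 1, ε ^ 2], ![1, ε, ε], ![1, ε ^ 2, 1]]

/-!
A linear form `l` vanishes at `t_{i,j}` iff `l_{i+2} = εʲ l_{i+1}`, indices modulo 3. Two flexes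
with the same `i` therefore force `l_{i+1} = l_{i+2} = 0`, so `l` is a multiple of a coordinate
form. Two flexes with different `i` force `l₀³ = l₁³ = l₂³`, so up to a scalar
`l = (1, εᵃ, εᵇ)`; these are the nine remaining forms.
-/

theorem exists_lt_eq_mul_pow_of_pow_eq_pow {R : Type*} [CommRing R] [IsDomain R] {ζ x y : R}
    {n : ℕ} (hζ : IsPrimitiveRoot ζ n) (hn : 0 < n) (hxy : x ^ n = y ^ n) :
    ∃ a < n, x = y * ζ ^ a := by
  have hx : x ∈ Polynomial.nthRoots n (y ^ n) := (Polynomial.mem_nthRoots hn).mpr hxy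
  rw [hζ.nthRoots_eq rfl, Multiset.mem_map] at hx
  obtain ⟨a, ha, rfl⟩ := hx
  exact ⟨a, Multiset.mem_range.mp ha, mul_comm _ _⟩

theorem eq_zero_of_mul_pow_eq_mul_pow {M₀ : Type*} [CommMonoidWithZero M₀] [IsCancelMulZero M₀]
    {ζ y : M₀} {n a b : ℕ} (hζ : IsPrimitiveRoot ζ n) (ha : a < n) (hb : b < n) (hab : a ≠ b)
    (h : y * ζ ^ a = y * ζ ^ b) : y = 0 :=
  (mul_eq_mul_left_iff.mp h).resolve_left fun hpow ↦ hab (hζ.pow_inj ha hb hpow)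

-- The hypotheses say that `f` is constant on the edges of a triangle opposite to `i` and to `j`.
theorem apply_eq_apply_of_two_edges {α : Type*} {f : Fin 3 → α} {i j : Fin 3} (hij : i ≠ j)
    (hi : f (i + 2) = f (i + 1)) (hj : f (j + 2) = f (j + 1)) (k m : Fin 3) : f k = f m := by
  fin_cases i <;> fin_cases j <;> fin_cases k <;> fin_cases m <;> simp_all

theorem lform_castLE_eq_single (ε : ℂ) (i : Fin 3) :
    lform ε (i.castLE (by decide)) = Pi.single i 1 := by
  ext j
  fin_cases i <;> fin_cases j <;> rfl

theorem exists_lform_eq_pow (ε : ℂ) (a b : Fin 3) :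
    ∃ k, lform ε k = ![1, ε ^ a.val, ε ^ b.val] := by
  use ![![3, 6, 9], ![7, 10, 4], ![11, 5, 8]] a b
  fin_cases a <;> fin_cases b <;> simp [lform]

theorem eq_smul_lform_of_forall_ne (ε : ℂ) {l : Fin 3 → ℂ} {i : Fin 3}
    (hl : ∀ j ≠ i, l j = 0) : l = l i • lform ε (i.castLE (by decide)) := by
  ext j
  rcases eq_or_ne j i with rfl | hj
  · simp [lform_castLE_eq_single]
  · simp [lform_castLE_eq_single, hl j hj, hj]

theorem exists_eq_smul_lform_of_cubes_eq {ε : ℂ} (hε : IsPrimitiveRoot ε 3) {l : Fin 3 → ℂ}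
    (hl : ∀ i j, l i ^ 3 = l j ^ 3) : ∃ k, l = l 0 • lform ε k := by
  obtain ⟨a, ha, h₁⟩ := exists_lt_eq_mul_pow_of_pow_eq_pow hε three_pos (hl 1 0)
  obtain ⟨b, hb, h₂⟩ := exists_lt_eq_mul_pow_of_pow_eq_pow hε three_pos (hl 2 0)
  obtain ⟨k, hk⟩ := exists_lform_eq_pow ε ⟨a, ha⟩ ⟨b, hb⟩
  refine ⟨k, ?_⟩
  ext i
  fin_cases i <;> simp [hk, h₁, h₂]

-- `ZMod 3` unfolds to `Fin 3`, so the row `i` of the flex `t_{i,a}` is also a coordinate index.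
theorem sum_mul_tpt_eq_zero_iff {ε : ℂ} {l : Fin 3 → ℂ} {i : Fin 3} {a : ZMod 3} :
    ∑ k : Fin 3, l k * tpt ε (i, a) k = 0 ↔ l (i + 2) = l (i + 1) * ε ^ a.val := by
  rw [Fin.sum_univ_three, ← sub_eq_zero (a := l _)]
  fin_cases i
  · change l 0 * 0 + l 1 * -(ε ^ a.val) + l 2 * 1 = 0 ↔ l 2 - l 1 * ε ^ a.val = 0
    ring_nf
  · change l 0 * 1 + l 1 * 0 + l 2 * -(ε ^ a.val) = 0 ↔ l 0 - l 2 * ε ^ a.val = 0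
    ring_nf
  · change l 0 * -(ε ^ a.val) + l 1 * 1 + l 2 * 0 = 0 ↔ l 1 - l 0 * ε ^ a.val = 0
    ring_nf

section TwoFlexes

variable {ε : ℂ} {l : Fin 3 → ℂ} {i j : Fin 3} {a b : ZMod 3}

theorem eq_smul_lform_of_flexes_same_row (hε : IsPrimitiveRoot ε 3) (hab : a ≠ b)
    (ha : ∑ k : Fin 3, l k * tpt ε (i, a) k = 0) (hb : ∑ k : Fin 3, l k * tpt ε (i, b) k = 0) :
    l = l i • lform ε (i.castLE (by decide)) := by
  rw [sum_mul_tpt_eq_zero_iff] at ha hb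
  have h₁ : l (i + 1) = 0 :=
    eq_zero_of_mul_pow_eq_mul_pow hε a.val_lt b.val_lt ((ZMod.val_injective 3).ne hab)
      (ha.symm.trans hb)
  have h₂ : l (i + 2) = 0 := by rw [ha, h₁, zero_mul]
  refine eq_smul_lform_of_forall_ne ε fun k hk ↦ ?_
  have eq_or_eq_of_ne : ∀ i k : Fin 3, k ≠ i → k = i + 1 ∨ k = i + 2 := by decide
  rcases eq_or_eq_of_ne i k hk with rfl | rfl
  exacts [h₁, h₂]

theorem cube_eq_cube_of_flex (hε : ε ^ 3 = 1) (h : ∑ k : Fin 3, l k * tpt ε (i, a) k = 0) :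
    l (i + 2) ^ 3 = l (i + 1) ^ 3 := by
  rw [sum_mul_tpt_eq_zero_iff.mp h, mul_pow, pow_right_comm, hε, one_pow, mul_one]

theorem exists_eq_smul_lform_of_flexes_distinct_rows (hε : IsPrimitiveRoot ε 3) (hij : i ≠ j)
    (hi : ∑ k : Fin 3, l k * tpt ε (i, a) k = 0) (hj : ∑ k : Fin 3, l k * tpt ε (j, b) k = 0) :
    ∃ k, l = l 0 • lform ε k :=
  exists_eq_smul_lform_of_cubes_eq hε <|
    apply_eq_apply_of_two_edges (f := fun k ↦ l k ^ 3) hij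
      (cube_eq_cube_of_flex hε.pow_eq_one hi) (cube_eq_cube_of_flex hε.pow_eq_one hj)

end TwoFlexes

/-- Every line of `ℙ²(ℂ)` through two distinct flexes of the Hesse configuration is one of
the twelve lines: a nonzero linear form vanishing at `t_{i,j}` and `t_{k,m}` with
`(i,j) ≠ (k,m)` is a nonzero multiple of one of the twelve listed forms. -/
theorem line_through_two_flexes (ε : ℂ) (hε : IsPrimitiveRoot ε 3) (l : Fin 3 → ℂ)
    (hl : l ≠ 0) (p q : ZMod 3 × ZMod 3) (hpq : p ≠ q)
    (hp : ∑ i : Fin 3, l i * tpt ε p i = 0) (hq : ∑ i : Fin 3, l i * tpt ε q i = 0) :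
    ∃ (c : ℂ) (k : Fin 12), c ≠ 0 ∧ l = c • lform ε k := by
  have h : ∃ (c : ℂ) (k : Fin 12), l = c • lform ε k := by
    obtain ⟨i, a⟩ := p
    obtain ⟨j, b⟩ := q
    by_cases hij : i = j
    · subst hij
      have hab : a ≠ b := fun h ↦ hpq (congrArg (Prod.mk i) h)
      exact ⟨_, _, eq_smul_lform_of_flexes_same_row hε hab hp hq⟩
    · exact ⟨_, exists_eq_smul_lform_of_flexes_distinct_rows hε hij hp hq⟩
  obtain ⟨c, k, hck⟩ := h
  exact ⟨c, k, left_ne_zero_of_smul (hck ▸ hl), hck⟩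
end

section
/- Let (i₁,j₁), (i₂,j₂), (i₃,j₃) ∈ 𝔽₃ × 𝔽₃ be pairwise distinct. Then the three vectors t_{i₁,j₁}, t_{i₂,j₂}, t_{i₃,j₃} are linearly dependent over ℂ (equivalently, the corresponding points of ℙ²(ℂ) are collinear) if and only if (i₁,j₁) + (i₂,j₂) + (i₃,j₃) = (0,0) in 𝔽₃ × 𝔽₃ (equivalently, the three index pairs are collinear in the affine plane 𝔽₃²). -/
open MvPolynomial

/-!
The index `i` of `t_{i,j}` names the side `xᵢ = 0` of the coordinate triangle containing the point,
and `-εʲ` is the ratio of its two nonzero coordinates. As no `t_{i,j}` is a vertex of the triangle,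
one of them is collinear with two others on a common side iff it also lies on that side; the second
indices are then `0, 1, 2` in some order and sum to zero. Points on three different sides are
collinear iff the product of their ratios is `-1`, by Menelaus' theorem, and this product is
`-ε^(j₁ + j₂ + j₃)`.
-/

section LinearIndependence

theorem linearIndependent_fin_three_rotate {R M : Type*} [Semiring R] [AddCommMonoid M]
    [Module R M] {u v w : M} :
    LinearIndependent R ![u, v, w] ↔ LinearIndependent R ![v, w, u] := by
  refine (linearIndependent_equiv' (finRotate 3) ?_).symm
  ext k
  fin_cases k <;> rfl

theorem not_linearIndependent_rows_iff_det_eq_zero {R n : Type*} [CommRing R] [IsDomain R]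
    [Fintype n] [DecidableEq n] {A : Matrix n n R} :
    ¬ LinearIndependent R A.row ↔ A.det = 0 := by
  refine ⟨Matrix.det_eq_zero_of_not_linearIndependent_rows, fun hA hrows ↦ ?_⟩
  obtain ⟨v, hv, hvA⟩ := Matrix.exists_vecMul_eq_zero_iff.mpr hA
  exact hv (Matrix.vecMul_injective_iff.mpr hrows (by simpa using hvA))

end LinearIndependence

section RootsOfUnity

variable {M : Type*} [CommMonoid M] {n : ℕ} [NeZero n] {ζ : M}

theorem pow_zmodVal_injective (hζ : IsPrimitiveRoot ζ n) :
    Function.Injective fun j : ZMod n ↦ ζ ^ j.val := fun j k h ↦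
  ZMod.val_injective n (hζ.pow_inj j.val_lt k.val_lt h)

theorem pow_zmodVal_mul_mul_eq_one_iff (hζ : IsPrimitiveRoot ζ n) (j k l : ZMod n) :
    ζ ^ j.val * ζ ^ k.val * ζ ^ l.val = 1 ↔ j + k + l = 0 := by
  rw [← pow_add, ← pow_add, hζ.pow_eq_one_iff_dvd, ← ZMod.natCast_eq_zero_iff]
  simp

end RootsOfUnity

section ZModThree

theorem zmod_three_add_add_eq_zero_of_ne :
    ∀ {i j k : ZMod 3}, i ≠ j → i ≠ k → j ≠ k → i + j + k = 0 := by
  decide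

theorem zmod_three_add_self_add_eq_zero_iff : ∀ {i k : ZMod 3}, i + i + k = 0 ↔ k = i := by
  decide

end ZModThree

section SidePoint

variable {R : Type*} [CommRing R]

/-- The point of the side `xᵢ = 0` of the coordinate triangle whose remaining coordinates, taken
cyclically from `xᵢ₊₁`, are `-a` and `1`. With this sign, the condition of Menelaus' theorem is that
the product of the three parameters is `1`. -/
def sidePoint (i : Fin 3) (a : R) : Fin 3 → R :=
  ![![0, -a, 1], ![1, 0, -a], ![-a, 1, 0]] i

theorem sidePoint_apply_eq_zero_iff {a : R} (ha : a ≠ 0) {i k : Fin 3} :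
    sidePoint i a k = 0 ↔ i = k := by
  have : Nontrivial R := nontrivial_of_ne a 0 ha
  fin_cases i <;> fin_cases k <;> simp [sidePoint, ha]

theorem det_sidePoint_sidePoint (i : Fin 3) (a b : R) (w : Fin 3 → R) :
    (Matrix.of ![sidePoint i a, sidePoint i b, w]).det = (b - a) * w i := by
  fin_cases i <;>
    simp only [sidePoint, Matrix.det_fin_three, Matrix.of_apply, Fin.zero_eta, Fin.mk_one,
      Fin.reduceFinMk, Matrix.cons_val] <;>
    ring

theorem det_sidePoint_eq_or_eq_neg_of_ne {i j k : Fin 3} (hij : i ≠ j) (hik : i ≠ k)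
    (hjk : j ≠ k) (a b c : R) :
    (Matrix.of ![sidePoint i a, sidePoint j b, sidePoint k c]).det = 1 - a * b * c ∨
      (Matrix.of ![sidePoint i a, sidePoint j b, sidePoint k c]).det = -(1 - a * b * c) := by
  fin_cases i <;> fin_cases j <;> fin_cases k <;> try contradiction
  all_goals
    simp only [sidePoint, Matrix.det_fin_three, Matrix.of_apply, Fin.zero_eta, Fin.mk_one,
      Fin.reduceFinMk, Matrix.cons_val]
    grind

variable [IsDomain R] {a b c : R}

theorem not_linearIndependent_sidePoint_iff_side_eq {i k : Fin 3} (hab : a ≠ b)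
    (hc : c ≠ 0) :
    ¬ LinearIndependent R ![sidePoint i a, sidePoint i b, sidePoint k c] ↔ k = i := by
  rw [← sidePoint_apply_eq_zero_iff hc, ← mul_eq_zero_iff_left (sub_ne_zero.mpr hab.symm),
    ← det_sidePoint_sidePoint]
  exact not_linearIndependent_rows_iff_det_eq_zero

/-- Menelaus' theorem for the coordinate triangle. -/
theorem not_linearIndependent_sidePoint_iff_mul_eq_one {i j k : Fin 3} (hij : i ≠ j)
    (hik : i ≠ k) (hjk : j ≠ k) :
    ¬ LinearIndependent R ![sidePoint i a, sidePoint j b, sidePoint k c] ↔ a * b * c = 1 := by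
  refine not_linearIndependent_rows_iff_det_eq_zero
    (A := Matrix.of ![sidePoint i a, sidePoint j b, sidePoint k c]) |>.trans ?_
  rcases det_sidePoint_eq_or_eq_neg_of_ne hij hik hjk a b c with h | h
  · rw [h, sub_eq_zero, eq_comm]
  · rw [h, neg_eq_zero, sub_eq_zero, eq_comm]

end SidePoint

section HesseFlex

variable {R : Type*} [CommRing R]

/-- The flex `t_{i,j}` of the Hesse configuration over an arbitrary commutative ring, for
`ij = (i, j)` and `ε` a primitive cube root of unity. The index `i : ZMod 3` is read in `Fin 3`,
to which `ZMod 3` unfolds. -/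
def hesseFlex (ε : R) (ij : ZMod 3 × ZMod 3) : Fin 3 → R :=
  sidePoint ij.1 (ε ^ ij.2.val)

variable [IsDomain R] {ε : R} {p₁ p₂ p₃ : ZMod 3 × ZMod 3}

theorem not_linearIndependent_hesseFlex_iff_of_fst_eq (hε : IsPrimitiveRoot ε 3) (h12 : p₁ ≠ p₂)
    (h13 : p₁ ≠ p₃) (h23 : p₂ ≠ p₃) (h : p₁.1 = p₂.1) :
    ¬ LinearIndependent R ![hesseFlex ε p₁, hesseFlex ε p₂, hesseFlex ε p₃] ↔
      p₁ + p₂ + p₃ = 0 := by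
  obtain ⟨i, j₁⟩ := p₁
  obtain ⟨_, j₂⟩ := p₂
  obtain ⟨k, j₃⟩ := p₃
  obtain rfl : i = _ := h
  have hj12 : j₁ ≠ j₂ := by simpa using h12
  have snd_sum_eq_zero (hk : k = i) : j₁ + j₂ + j₃ = 0 :=
    zmod_three_add_add_eq_zero_of_ne hj12 (by simpa [hk] using h13) (by simpa [hk] using h23)
  calc ¬ LinearIndependent R ![hesseFlex ε (i, j₁), hesseFlex ε (i, j₂), hesseFlex ε (k, j₃)]
    _ ↔ k = i := not_linearIndependent_sidePoint_iff_side_eq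
        ((pow_zmodVal_injective hε).ne hj12) (pow_ne_zero _ (hε.ne_zero three_ne_zero))
    _ ↔ i + i + k = 0 ∧ j₁ + j₂ + j₃ = 0 := by
        rw [zmod_three_add_self_add_eq_zero_iff, iff_self_and]
        exact snd_sum_eq_zero
    _ ↔ (i, j₁) + (i, j₂) + (k, j₃) = 0 := by simp

theorem not_linearIndependent_hesseFlex_iff_of_fst_ne (hε : IsPrimitiveRoot ε 3)
    (h12 : p₁.1 ≠ p₂.1) (h13 : p₁.1 ≠ p₃.1) (h23 : p₂.1 ≠ p₃.1) :
    ¬ LinearIndependent R ![hesseFlex ε p₁, hesseFlex ε p₂, hesseFlex ε p₃] ↔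
      p₁ + p₂ + p₃ = 0 :=
  calc ¬ LinearIndependent R ![hesseFlex ε p₁, hesseFlex ε p₂, hesseFlex ε p₃]
    _ ↔ ε ^ p₁.2.val * ε ^ p₂.2.val * ε ^ p₃.2.val = 1 :=
        not_linearIndependent_sidePoint_iff_mul_eq_one h12 h13 h23
    _ ↔ p₁.2 + p₂.2 + p₃.2 = 0 := pow_zmodVal_mul_mul_eq_one_iff hε _ _ _
    _ ↔ p₁ + p₂ + p₃ = 0 := by
        simp [Prod.ext_iff, zmod_three_add_add_eq_zero_of_ne h12 h13 h23]

theorem flexes_collinear_iff_indices_sum_zero_general (hε : IsPrimitiveRoot ε 3)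
    (h12 : p₁ ≠ p₂) (h13 : p₁ ≠ p₃) (h23 : p₂ ≠ p₃) :
    ¬ LinearIndependent R ![hesseFlex ε p₁, hesseFlex ε p₂, hesseFlex ε p₃] ↔
      p₁ + p₂ + p₃ = 0 := by
  by_cases h12' : p₁.1 = p₂.1
  · exact not_linearIndependent_hesseFlex_iff_of_fst_eq hε h12 h13 h23 h12'
  by_cases h23' : p₂.1 = p₃.1
  · rw [linearIndependent_fin_three_rotate, add_assoc, add_comm]
    exact not_linearIndependent_hesseFlex_iff_of_fst_eq hε h23 h12.symm h13.symm h23'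
  by_cases h13' : p₁.1 = p₃.1
  · rw [← linearIndependent_fin_three_rotate, add_comm, ← add_assoc]
    exact not_linearIndependent_hesseFlex_iff_of_fst_eq hε h13.symm h23.symm h12 h13'.symm
  exact not_linearIndependent_hesseFlex_iff_of_fst_ne hε h12' h13' h23'

end HesseFlex

/-- Three distinct flexes of the Hesse configuration are collinear in `ℙ²(ℂ)` (i.e. the
vectors `t_{i₁,j₁}, t_{i₂,j₂}, t_{i₃,j₃}` are linearly dependent) iff the sum of their
index pairs is zero in `𝔽₃ × 𝔽₃` (i.e. the indices are collinear in the affine plane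
`𝔽₃²`). -/
theorem flexes_collinear_iff_indices_sum_zero (ε : ℂ) (hε : IsPrimitiveRoot ε 3)
    (p₁ p₂ p₃ : ZMod 3 × ZMod 3) (h12 : p₁ ≠ p₂) (h13 : p₁ ≠ p₃) (h23 : p₂ ≠ p₃) :
    ¬ LinearIndependent ℂ ![tpt ε p₁, tpt ε p₂, tpt ε p₃] ↔ p₁ + p₂ + p₃ = 0 :=
  flexes_collinear_iff_indices_sum_zero_general hε h12 h13 h23
end

section
/- Let σ be a permutation of 𝔽₃ × 𝔽₃. There exists g ∈ GL₃(ℂ) such that for every (i,j) ∈ 𝔽₃ × 𝔽₃ the vector g·t_{i,j} is a nonzero scalar multiple of t_{σ(i,j)}, if and only if σ is an affine transformation of 𝔽₃² whose linear part has determinant 1, i.e., there exist A ∈ SL₂(𝔽₃) and b ∈ 𝔽₃² with σ(v) = A·v + b for all v ∈ 𝔽₃². (Together with the triviality of the pointwise stabilizer, this yields a group isomorphism between the Hessian group — the setwise stabilizer of the nine flexes in PGL₃(ℂ), of order 216 — and the group SAff(𝔽₃²).) -/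
open MvPolynomial

/-!
The Hessian group acts on the plane `𝔽₃²` indexing the flexes. Diagonal matrices induce the lower
shears and the vertical translations, and the discrete Fourier matrix induces the rotation
`(i, j) ↦ (j, -i)`, which conjugates these into the upper shears and the horizontal translations;
together they generate all of `SAff(𝔽₃²)`.

Conversely, `SAff(𝔽₃²)` moves any two points to `(0, 0)` and `(0, 1)`, so one small determinant
shows that three distinct flexes are collinear iff their indices sum to zero. A projectivity
therefore preserves zero-sum triples of indices, which forces it to act by an affine map. After
composing with an element of `SAff(𝔽₃²)` this map is `(i, j) ↦ (i, d * j)`, where `d` is the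
determinant, and the relations `t_{0,0} + t_{1,0} + t_{2,0} = 0` and
`t_{1,1} = t_{1,0} + t_{0,1} - ε t_{0,0}` force `ε ^ d = ε`.
-/

open Matrix

theorem pow_val_add {M : Type*} [Monoid M] {n : ℕ} [NeZero n] {ζ : M} (hζ : ζ ^ n = 1)
    (a b : ZMod n) : ζ ^ (a + b).val = ζ ^ a.val * ζ ^ b.val := by
  rw [ZMod.val_add, ← pow_eq_pow_mod _ hζ, pow_add]

theorem isPrimitiveRoot_pow_val_inj {M : Type*} [CommMonoid M] {n : ℕ} [NeZero n] {ζ : M}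
    (hζ : IsPrimitiveRoot ζ n) {a b : ZMod n} : ζ ^ a.val = ζ ^ b.val ↔ a = b :=
  ⟨fun h ↦ ZMod.val_injective n (hζ.pow_inj a.val_lt b.val_lt h), fun h ↦ h ▸ rfl⟩

theorem exists_addMonoidHom_of_zero_sum_triples {V W : Type*} [AddCommGroup V] [AddCommGroup W]
    {f : V → W} (hf : ∀ u v w, u + v + w = 0 → f u + f v + f w = 0) :
    ∃ L : V →+ W, ∀ v, f v = L v + f 0 := by
  have hzero : f 0 + f 0 + f 0 = 0 := hf 0 0 0 (by simp)
  have hneg (v : V) : f v + f (-v) + f 0 = 0 := hf v (-v) 0 (by simp)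
  have map_add (u v : V) : f (u + v) - f 0 = f u - f 0 + (f v - f 0) := by
    have huv : f (u + v) + f (-u) + f (-v) = 0 := hf (u + v) (-u) (-v) (by abel)
    linear_combination (norm := module) huv - hneg u - hneg v + hzero
  exact ⟨AddMonoidHom.mk' (fun v ↦ f v - f 0) map_add, fun v ↦ by simp⟩

theorem forall_zmod_three_prod {α : Type*} {p : ZMod 3 × α → Prop} (h0 : ∀ j, p (0, j))
    (h1 : ∀ j, p (1, j)) (h2 : ∀ j, p (2, j)) (v : ZMod 3 × α) : p v := by
  obtain ⟨i, j⟩ := v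
  fin_cases i
  exacts [h0 j, h1 j, h2 j]

section PlaneAffine

variable {R : Type*} [CommRing R]

/-- The affine self-map `v ↦ A v + b` of the plane `R²`, with points written as pairs to match
the indexing of the flexes. -/
def planeAffine (A : Matrix (Fin 2) (Fin 2) R) (b v : R × R) : R × R :=
  ((A *ᵥ ![v.1, v.2]) 0 + b.1, (A *ᵥ ![v.1, v.2]) 1 + b.2)

theorem planeAffine_apply (A : Matrix (Fin 2) (Fin 2) R) (b v : R × R) :
    planeAffine A b v = (A 0 0 * v.1 + A 0 1 * v.2 + b.1, A 1 0 * v.1 + A 1 1 * v.2 + b.2) := by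
  simp [planeAffine, mulVec, dotProduct, Fin.sum_univ_two]

theorem planeAffine_mul (A B : Matrix (Fin 2) (Fin 2) R) (b c : R × R) :
    planeAffine (A * B) (planeAffine A b c) = planeAffine A b ∘ planeAffine B c := by
  ext v <;> simp only [planeAffine_apply, Function.comp_apply, mul_apply, Fin.sum_univ_two] <;> ring

theorem planeAffine_add_add [CharP R 3] (A : Matrix (Fin 2) (Fin 2) R) (b u v w : R × R) :
    planeAffine A b u + planeAffine A b v + planeAffine A b w = planeAffine A 0 (u + v + w) := by
  have hthree : (3 : R) = 0 := CharP.ofNat_eq_zero R 3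
  simp only [planeAffine_apply]
  ext <;> simp only [Prod.fst_add, Prod.snd_add, Prod.fst_zero, Prod.snd_zero]
  · linear_combination b.1 * hthree
  · linear_combination b.2 * hthree

theorem planeAffine_bijective (A : SpecialLinearGroup (Fin 2) R) (b : R × R) :
    Function.Bijective (planeAffine A.1 b) := by
  have hA := A.2
  rw [det_fin_two] at hA
  refine Function.bijective_iff_has_inverse.2 ⟨fun v ↦
    (A 1 1 * (v.1 - b.1) - A 0 1 * (v.2 - b.2), A 0 0 * (v.2 - b.2) - A 1 0 * (v.1 - b.1)),
    fun v ↦ ?_, fun v ↦ ?_⟩ <;> simp only [planeAffine_apply] <;> ext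
  · linear_combination v.1 * hA
  · linear_combination v.2 * hA
  · linear_combination (v.1 - b.1) * hA
  · linear_combination (v.2 - b.2) * hA

theorem det_ne_zero_of_planeAffine_injective [IsDomain R] {A : Matrix (Fin 2) (Fin 2) R}
    {b : R × R} (h : Function.Injective (planeAffine A b)) : A.det ≠ 0 := by
  intro hA
  obtain ⟨x, hx, hAx⟩ := exists_mulVec_eq_zero_iff.2 hA
  have hx_eq : ![x 0, x 1] = x := by ext i; fin_cases i <;> rfl
  have : (x 0, x 1) = (0, 0) := h (by simp [planeAffine, hx_eq, hAx])
  exact hx (by ext i; fin_cases i <;> simp_all)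

theorem exists_planeAffine_map_pair {K : Type*} [Field K] {u v : K × K} (huv : u ≠ v) :
    ∃ A : SpecialLinearGroup (Fin 2) K,
      planeAffine A.1 u (0, 0) = u ∧ planeAffine A.1 u (0, 1) = v := by
  have hcop : IsCoprime (v.1 - u.1) (v.2 - u.2) := by
    rw [Semifield.isCoprime_iff, sub_ne_zero, sub_ne_zero]
    by_contra! h
    exact huv (Prod.ext h.1.symm h.2.symm)
  obtain ⟨A, h0, h1⟩ := hcop.exists_SL2_col 1
  exact ⟨A, by simp [planeAffine_apply], by simp [planeAffine_apply, h0, h1]⟩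

end PlaneAffine

theorem exists_planeAffine_of_zero_sum_triples {n : ℕ} {f : ZMod n × ZMod n → ZMod n × ZMod n}
    (hf : ∀ u v w, u + v + w = 0 → f u + f v + f w = 0) :
    ∃ A : Matrix (Fin 2) (Fin 2) (ZMod n), f = planeAffine A (f 0) := by
  obtain ⟨L, hL⟩ := exists_addMonoidHom_of_zero_sum_triples hf
  have hLv (v : ZMod n × ZMod n) : L v = v.1 • L (1, 0) + v.2 • L (0, 1) := by
    rw [← L.coe_toZModLinearMap n, ← map_smul, ← map_smul, ← map_add]
    simp
  refine ⟨!![(L (1, 0)).1, (L (0, 1)).1; (L (1, 0)).2, (L (0, 1)).2], funext fun v ↦ ?_⟩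
  rw [hL, hLv, planeAffine_apply]
  ext <;> simp [mul_comm]

section Flex

variable {K : Type*} [Field K]

/-- The nine flexes over an arbitrary field; `tpt` is the case `K = ℂ`. -/
def flex (ε : K) (v : ZMod 3 × ZMod 3) : Fin 3 → K :=
  ![![0, -(ε ^ v.2.val), 1], ![1, 0, -(ε ^ v.2.val)], ![-(ε ^ v.2.val), 1, 0]]
    ⟨v.1.val, ZMod.val_lt v.1⟩

/-- A self-map `f` of the index plane is projectively induced if some projectivity of `ℙ²` sends
each flex `t_v` to `t_{f v}`. The projectivity is represented by a matrix, which has to send the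
vector `t_v` to a nonzero multiple of `t_{f v}`. -/
def IsProjectivelyInduced (ε : K) (f : ZMod 3 × ZMod 3 → ZMod 3 × ZMod 3) : Prop :=
  ∃ g : GeneralLinearGroup (Fin 3) K, ∀ v, ∃ c : K, c ≠ 0 ∧ g.1 *ᵥ flex ε v = c • flex ε (f v)

variable {ε : K}

theorem flex_zero (ε : K) (j : ZMod 3) : flex ε (0, j) = ![0, -(ε ^ j.val), 1] := rfl

theorem flex_one (ε : K) (j : ZMod 3) : flex ε (1, j) = ![1, 0, -(ε ^ j.val)] := rfl

theorem flex_two (ε : K) (j : ZMod 3) : flex ε (2, j) = ![-(ε ^ j.val), 1, 0] := rfl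

theorem flex_add_flex_add_flex (ε : K) : flex ε (0, 0) + flex ε (1, 0) + flex ε (2, 0) = 0 := by
  ext m; fin_cases m <;> simp [flex_zero, flex_one, flex_two]

theorem flex_one_one (ε : K) :
    flex ε (1, 1) = flex ε (1, 0) + flex ε (0, 1) - ε • flex ε (0, 0) := by
  have hval : (1 : ZMod 3).val = 1 := rfl
  ext m; fin_cases m <;> simp [flex_zero, flex_one, hval]

namespace IsProjectivelyInduced

variable {f h : ZMod 3 × ZMod 3 → ZMod 3 × ZMod 3}

theorem of_det_ne_zero {M : Matrix (Fin 3) (Fin 3) K} (hM : M.det ≠ 0)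
    (hMf : ∀ v, ∃ c : K, c ≠ 0 ∧ M *ᵥ flex ε v = c • flex ε (f v)) : IsProjectivelyInduced ε f :=
  ⟨GeneralLinearGroup.mkOfDetNeZero M hM, hMf⟩

theorem comp (hf : IsProjectivelyInduced ε f) (hh : IsProjectivelyInduced ε h) :
    IsProjectivelyInduced ε (f ∘ h) := by
  obtain ⟨g, hg⟩ := hf
  obtain ⟨k, hk⟩ := hh
  refine ⟨g * k, fun v ↦ ?_⟩
  obtain ⟨c, hc, hkv⟩ := hk v
  obtain ⟨d, hd, hgv⟩ := hg (h v)
  refine ⟨c * d, mul_ne_zero hc hd, ?_⟩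
  rw [Units.val_mul, ← mulVec_mulVec, hkv, mulVec_smul, hgv, smul_smul, Function.comp_apply]

theorem of_comp_left (hf : IsProjectivelyInduced ε f) (hfh : IsProjectivelyInduced ε (f ∘ h)) :
    IsProjectivelyInduced ε h := by
  obtain ⟨g, hg⟩ := hf
  obtain ⟨k, hk⟩ := hfh
  refine ⟨g⁻¹ * k, fun v ↦ ?_⟩
  obtain ⟨c, hc, hkv⟩ := hk v
  obtain ⟨d, hd, hgv⟩ := hg (h v)
  have hinv : g⁻¹.1 *ᵥ flex ε (f (h v)) = d⁻¹ • flex ε (h v) := by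
    rw [eq_inv_smul_iff₀ hd, ← mulVec_smul, ← hgv, mulVec_mulVec, Units.inv_mul, one_mulVec]
  refine ⟨c * d⁻¹, mul_ne_zero hc (inv_ne_zero hd), ?_⟩
  rw [Units.val_mul, ← mulVec_mulVec, hkv, mulVec_smul, Function.comp_apply, hinv, smul_smul]

theorem linearIndependent_iff (hf : IsProjectivelyInduced ε f) {ι : Type*}
    (p : ι → ZMod 3 × ZMod 3) :
    LinearIndependent K (fun i ↦ flex ε (f (p i))) ↔
      LinearIndependent K (fun i ↦ flex ε (p i)) := by
  obtain ⟨g, hg⟩ := hf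
  choose c hc hgc using hg
  have hker : LinearMap.ker g.1.mulVecLin = ⊥ :=
    LinearMap.ker_eq_bot.2 (mulVec_injective_of_isUnit g.isUnit)
  have hscale : g.1.mulVecLin ∘ (fun i ↦ flex ε (p i)) =
      (fun i ↦ Units.mk0 _ (hc (p i))) • fun i ↦ flex ε (f (p i)) := funext fun i ↦ hgc (p i)
  rw [← LinearIndependent.units_smul_iff _ fun i ↦ Units.mk0 _ (hc (p i)), ← hscale,
    LinearMap.linearIndependent_iff _ hker]

end IsProjectivelyInduced

section Generators

theorem isProjectivelyInduced_lowerShear (hε : IsPrimitiveRoot ε 3) (k l : ZMod 3) :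
    IsProjectivelyInduced ε fun v ↦ (v.1, v.2 + k * v.1 + l) := by
  have hpow (m : ℕ) : ε ^ m ≠ 0 := pow_ne_zero m (hε.ne_zero three_ne_zero)
  have hadd (a b c d : ZMod 3) (h : a + b = c + d) :
      ε ^ a.val * ε ^ b.val = ε ^ c.val * ε ^ d.val := by
    rw [← pow_val_add hε.pow_eq_one, ← pow_val_add hε.pow_eq_one, h]
  refine .of_det_ne_zero (M := diagonal ![1, ε ^ (k - l).val, ε ^ (k + l).val])
    (by simp [Fin.prod_univ_three, hpow, -pow_eq_zero_iff']) ?_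
  refine forall_zmod_three_prod (fun j ↦ ?_) (fun j ↦ ?_) fun j ↦ ?_
  · have h : ε ^ (k - l).val * ε ^ j.val = ε ^ (k + l).val * ε ^ (j + l).val :=
      hadd _ _ _ _ (by grind)
    refine ⟨ε ^ (k + l).val, hpow _, ?_⟩
    ext m; fin_cases m <;> simp [flex_zero, mulVec_diagonal, h]
  · have h : ε ^ (k + l).val * ε ^ j.val = ε ^ (j + k + l).val := by
      simpa using hadd (k + l) j 0 (j + k + l) (by ring)
    refine ⟨1, one_ne_zero, ?_⟩
    ext m; fin_cases m <;> simp [flex_one, mulVec_diagonal, h]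
  · have h : ε ^ j.val = ε ^ (k - l).val * ε ^ (j + k * 2 + l).val := by
      simpa using hadd 0 j (k - l) (j + k * 2 + l) (by grind)
    refine ⟨ε ^ (k - l).val, hpow _, ?_⟩
    ext m; fin_cases m <;> simp [flex_two, mulVec_diagonal, h]

/-- The matrix of the discrete Fourier transform on `ℤ/3ℤ`. -/
def fourierMatrix (ε : K) : Matrix (Fin 3) (Fin 3) K :=
  !![1, 1, 1; 1, ε, ε ^ 2; 1, ε ^ 2, ε]

theorem det_fourierMatrix (hε : ε ^ 3 = 1) : (fourierMatrix ε).det = (1 - ε) ^ 3 := by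
  simp only [fourierMatrix, det_fin_three, of_apply, cons_val', cons_val_zero, cons_val_fin_one,
    cons_val_one, cons_val]
  linear_combination (1 - ε) * hε

theorem fourierMatrix_mulVec_flex (hε : IsPrimitiveRoot ε 3) (v : ZMod 3 × ZMod 3) :
    fourierMatrix ε *ᵥ flex ε v =
      ((1 - ε) * ε ^ ((1 - v.1) * (1 - v.2)).val) • flex ε (v.2, -v.1) := by
  have hsum : 1 + ε + ε ^ 2 = 0 := by
    simpa [Finset.sum_range_succ] using hε.geom_sum_eq_zero (by norm_num)
  have hvals : (1 : ZMod 3).val = 1 ∧ (2 : ZMod 3).val = 2 := by decide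
  have hmod : (-1 : ZMod 3) = 2 ∧ (-2 : ZMod 3) = 1 ∧ (1 - 2 : ZMod 3) = 2 ∧
    (2 * 2 : ZMod 3) = 1 := by decide
  have hcases : ∀ j : ZMod 3, j = 0 ∨ j = 1 ∨ j = 2 := by decide
  clear hε
  revert v
  refine forall_zmod_three_prod (fun j ↦ ?_) (fun j ↦ ?_) fun j ↦ ?_ <;>
    obtain rfl | rfl | rfl := hcases j <;> ext m <;> fin_cases m <;>
    simp [fourierMatrix, flex_zero, flex_one, flex_two, hvals, hmod] <;> grind

theorem isProjectivelyInduced_rotation (hε : IsPrimitiveRoot ε 3) :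
    IsProjectivelyInduced ε fun v ↦ (v.2, -v.1) := by
  have hε1 : 1 - ε ≠ 0 := sub_ne_zero.2 (hε.ne_one (by norm_num)).symm
  have hε0 : ε ≠ 0 := hε.ne_zero three_ne_zero
  exact .of_det_ne_zero (by simp [det_fourierMatrix hε.pow_eq_one, hε1]) fun v ↦
    ⟨_, mul_ne_zero hε1 (pow_ne_zero _ hε0), fourierMatrix_mulVec_flex hε v⟩

theorem isProjectivelyInduced_upperShear (hε : IsPrimitiveRoot ε 3) (k l : ZMod 3) :
    IsProjectivelyInduced ε fun v ↦ (v.1 + k * v.2 + l, v.2) := by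
  have hrot := isProjectivelyInduced_rotation hε
  refine hrot.of_comp_left ?_
  convert (isProjectivelyInduced_lowerShear hε (-k) (-l)).comp hrot using 1
  ext v
  · rfl
  · simp only [Function.comp_apply]
    ring

theorem isProjectivelyInduced_planeAffine (hε : IsPrimitiveRoot ε 3)
    (A : SpecialLinearGroup (Fin 2) (ZMod 3)) (b : ZMod 3 × ZMod 3) :
    IsProjectivelyInduced ε (planeAffine A.1 b) := by
  have hlinear : IsProjectivelyInduced ε (planeAffine A.1 0) := by
    induction A using SL2.transvection_induction with
    | htransvec i j hij c =>
      fin_cases i <;> fin_cases j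
      · exact absurd rfl hij
      · convert isProjectivelyInduced_upperShear hε c 0 using 2 with v
        simp [planeAffine_apply, SpecialLinearGroup.transvection_coe, single]
      · convert isProjectivelyInduced_lowerShear hε c 0 using 2 with v
        simp [planeAffine_apply, SpecialLinearGroup.transvection_coe, single, add_comm]
      · exact absurd rfl hij
    | hmul A B hA hB =>
      convert hA.comp hB using 1
      have h0 : planeAffine A.1 0 0 = 0 := by simp [planeAffine_apply]
      rw [← planeAffine_mul, h0]
      rfl
  convert ((isProjectivelyInduced_upperShear hε 0 b.1).comp
    (isProjectivelyInduced_lowerShear hε 0 b.2)).comp hlinear using 1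
  ext v <;> simp [planeAffine_apply]

end Generators

section Collinearity

theorem linearIndependent_flex_base_iff (hε : IsPrimitiveRoot ε 3) (w : ZMod 3 × ZMod 3) :
    LinearIndependent K (fun i ↦ flex ε (![(0, 0), (0, 1), w] i)) ↔ w.1 ≠ 0 := by
  have hε0 : ε ≠ 0 := hε.ne_zero three_ne_zero
  have hε1 : ε - 1 ≠ 0 := sub_ne_zero.2 (hε.ne_one (by norm_num))
  have hzero : ∀ w, flex ε w 0 = 0 ↔ w.1 = 0 :=
    forall_zmod_three_prod (by simp [flex_zero]) (by simp [flex_one])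
      (by simp [flex_two, hε0, (by decide : (2 : ZMod 3) ≠ 0)])
  have hdet : (of fun i ↦ flex ε (![(0, 0), (0, 1), w] i)).det = flex ε w 0 * (ε - 1) := by
    have hval : (1 : ZMod 3).val = 1 := rfl
    simp only [det_fin_three, of_apply, flex_zero, cons_val_zero, cons_val_one, cons_val,
      ZMod.val_zero, hval]
    ring
  rw [ne_eq, ← hzero, ← ne_eq, ← mul_ne_zero_iff_right hε1, ← hdet, ← isUnit_iff_ne_zero,
    ← isUnit_iff_isUnit_det, ← linearIndependent_rows_iff_isUnit]
  rfl

theorem linearIndependent_flex_iff (hε : IsPrimitiveRoot ε 3) {u v w : ZMod 3 × ZMod 3}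
    (huv : u ≠ v) (huw : u ≠ w) (hvw : v ≠ w) :
    LinearIndependent K (fun i ↦ flex ε (![u, v, w] i)) ↔ u + v + w ≠ 0 := by
  obtain ⟨A, hAu, hAv⟩ := exists_planeAffine_map_pair huv
  obtain ⟨w, rfl⟩ := (planeAffine_bijective A u).surjective w
  have hcomp (i : Fin 3) : ![u, v, planeAffine A.1 u w] i =
      planeAffine A.1 u (![(0, 0), (0, 1), w] i) := by
    fin_cases i <;> simp [hAu, hAv]
  simp only [hcomp, (isProjectivelyInduced_planeAffine hε A u).linearIndependent_iff,
    linearIndependent_flex_base_iff hε]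
  have hsum : u + v + planeAffine A.1 u w = planeAffine A.1 0 ((0, 0) + (0, 1) + w) := by
    rw [← planeAffine_add_add A.1 u, hAu, hAv]
  have hne (x : ZMod 3 × ZMod 3) : planeAffine A.1 0 x ≠ 0 ↔ x ≠ 0 := by
    simpa [planeAffine_apply] using (planeAffine_bijective A 0).injective.ne_iff (x := x) (y := 0)
  have hbase : ∀ w : ZMod 3 × ZMod 3, w ≠ (0, 0) → w ≠ (0, 1) →
      (w.1 ≠ 0 ↔ (0, 0) + (0, 1) + w ≠ 0) := by decide
  rw [hsum, hne]
  exact hbase w (by grind) (by grind)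

end Collinearity

namespace IsProjectivelyInduced

variable {f : ZMod 3 × ZMod 3 → ZMod 3 × ZMod 3}

theorem injective (hε : IsPrimitiveRoot ε 3) (hf : IsProjectivelyInduced ε f) :
    Function.Injective f := by
  intro u v huv
  by_contra hne
  have hthird : ∀ u v : ZMod 3 × ZMod 3, u ≠ v → ∃ w, u ≠ w ∧ v ≠ w ∧ u + v + w ≠ 0 := by decide
  obtain ⟨w, huw, hvw, hw⟩ := hthird u v hne
  have hind := (hf.linearIndependent_iff _).2 ((linearIndependent_flex_iff hε hne huw hvw).2 hw)
  exact zero_ne_one (hind.injective (a₁ := 0) (a₂ := 1) (by simp [huv]))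

theorem zero_sum_triples (hε : IsPrimitiveRoot ε 3) (hf : IsProjectivelyInduced ε f)
    (u v w : ZMod 3 × ZMod 3) (h : u + v + w = 0) : f u + f v + f w = 0 := by
  have htriple : ∀ u v w : ZMod 3 × ZMod 3,
      u + v + w = 0 → (u = v ∧ v = w) ∨ (u ≠ v ∧ u ≠ w ∧ v ≠ w) := by decide
  have hthree : ∀ x : ZMod 3 × ZMod 3, x + x + x = 0 := by decide
  have hinj := hf.injective hε
  obtain ⟨rfl, rfl⟩ | ⟨huv, huw, hvw⟩ := htriple u v w h
  · exact hthree (f u)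
  · by_contra hne
    have hind := (linearIndependent_flex_iff hε (hinj.ne huv) (hinj.ne huw) (hinj.ne hvw)).2 hne
    have hcomp (i : Fin 3) : ![f u, f v, f w] i = f (![u, v, w] i) := by fin_cases i <;> rfl
    simp only [hcomp, hf.linearIndependent_iff] at hind
    exact (linearIndependent_flex_iff hε huv huw hvw).1 hind h

theorem eq_one_of_vertical_scaling (hε : IsPrimitiveRoot ε 3) {d : ZMod 3} (hd : d ≠ 0)
    (h : IsProjectivelyInduced ε fun v ↦ (v.1, d * v.2)) : d = 1 := by
  obtain ⟨g, hg⟩ := h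
  obtain ⟨a₀, ha₀, h00⟩ := hg (0, 0)
  obtain ⟨a₁, -, h10⟩ := hg (1, 0)
  obtain ⟨a₂, -, h20⟩ := hg (2, 0)
  obtain ⟨b₀, -, h01⟩ := hg (0, 1)
  obtain ⟨b₁, -, h11⟩ := hg (1, 1)
  simp only [mul_zero, mul_one] at h00 h10 h20 h01 h11
  have htriangle : a₀ • flex ε (0, 0) + a₁ • flex ε (1, 0) + a₂ • flex ε (2, 0) = 0 := by
    rw [← h00, ← h10, ← h20, ← mulVec_add, ← mulVec_add, flex_add_flex_add_flex, mulVec_zero]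
  have hrelation : b₁ • flex ε (1, d) =
      a₁ • flex ε (1, 0) + b₀ • flex ε (0, d) - ε • a₀ • flex ε (0, 0) := by
    rw [← h00, ← h10, ← h01, ← h11, flex_one_one, mulVec_sub, mulVec_add, mulVec_smul]
  have ha₁₂ : a₁ - a₂ = 0 := by
    simpa [flex_zero, flex_one, flex_two, sub_eq_add_neg] using congrFun htriangle 0
  have ha₀₂ : -a₀ + a₂ = 0 := by
    simpa [flex_zero, flex_one, flex_two] using congrFun htriangle 1
  have hcoord₀ : b₁ = a₁ := by simpa [flex_zero, flex_one] using congrFun hrelation 0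
  have hcoord₁ : 0 = -(b₀ * ε ^ d.val) + ε * a₀ := by
    simpa [flex_zero, flex_one] using congrFun hrelation 1
  have hcoord₂ : -(b₁ * ε ^ d.val) = -a₁ + b₀ - ε * a₀ := by
    simpa [flex_zero, flex_one] using congrFun hrelation 2
  have hquad : a₀ * ((ε ^ d.val - 1) * (ε ^ d.val - ε)) = 0 := by
    linear_combination (ε ^ d.val - (ε ^ d.val) ^ 2) * (ha₁₂ + ha₀₂) - (ε ^ d.val) ^ 2 * hcoord₀ -
      hcoord₁ - ε ^ d.val * hcoord₂
  have hd1 : ε ^ d.val - 1 ≠ 0 := by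
    simpa [sub_eq_zero] using (isPrimitiveRoot_pow_val_inj hε (b := 0)).not.2 hd
  rw [mul_eq_zero, mul_eq_zero, or_iff_right ha₀, or_iff_right hd1, sub_eq_zero] at hquad
  exact (isPrimitiveRoot_pow_val_inj hε).1 (hquad.trans (pow_one ε).symm)

theorem det_eq_one (hε : IsPrimitiveRoot ε 3) {A : Matrix (Fin 2) (Fin 2) (ZMod 3)}
    {b : ZMod 3 × ZMod 3} (h : IsProjectivelyInduced ε (planeAffine A b)) : A.det = 1 := by
  have hd : A.det ≠ 0 := det_ne_zero_of_planeAffine_injective (h.injective hε)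
  let B : SpecialLinearGroup (Fin 2) (ZMod 3) := ⟨A * diagonal ![1, A.det⁻¹], by simp [hd]⟩
  have hcancel (x y : ZMod 3) : x * A.det⁻¹ * (A.det * y) = x * y := by
    rw [mul_assoc, inv_mul_cancel_left₀ hd]
  have hfactor : planeAffine A b = planeAffine B.1 b ∘ fun v ↦ (v.1, A.det * v.2) := by
    ext v <;> simp [planeAffine_apply, B, mul_apply, hcancel]
  rw [hfactor] at h
  exact eq_one_of_vertical_scaling hε hd ((isProjectivelyInduced_planeAffine hε B b).of_comp_left h)

end IsProjectivelyInduced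

end Flex

theorem flex_permutation_induced_iff_saff_general {K : Type*} [Field K] {ε : K}
    (hε : IsPrimitiveRoot ε 3) (f : ZMod 3 × ZMod 3 → ZMod 3 × ZMod 3) :
    IsProjectivelyInduced ε f ↔
      ∃ (A : SpecialLinearGroup (Fin 2) (ZMod 3)) (b : ZMod 3 × ZMod 3),
        ∀ v, f v = planeAffine A.1 b v := by
  constructor
  · intro hf
    obtain ⟨A, hA⟩ := exists_planeAffine_of_zero_sum_triples (hf.zero_sum_triples hε)
    rw [hA] at hf
    exact ⟨⟨A, hf.det_eq_one hε⟩, f 0, congrFun hA⟩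
  · rintro ⟨A, b, hf⟩
    rw [funext hf]
    exact isProjectivelyInduced_planeAffine hε A b

/-- A permutation `σ` of the nine flex indices is induced by a projective transformation
of `ℙ²(ℂ)` permuting the nine flexes iff `σ` is an affine transformation of the plane
`𝔽₃²` whose linear part has determinant 1 (this identifies the Hessian group with
`SAff(𝔽₃²)`). -/
theorem flex_permutation_induced_iff_saff (ε : ℂ) (hε : IsPrimitiveRoot ε 3)
    (σ : Equiv.Perm (ZMod 3 × ZMod 3)) :
    (∃ g : Matrix.GeneralLinearGroup (Fin 3) ℂ, ∀ ij : ZMod 3 × ZMod 3, ∃ c : ℂ, c ≠ 0 ∧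
        Matrix.mulVec (g : Matrix (Fin 3) (Fin 3) ℂ) (tpt ε ij) = c • tpt ε (σ ij)) ↔
      ∃ (A : Matrix.SpecialLinearGroup (Fin 2) (ZMod 3)) (b : ZMod 3 × ZMod 3),
        ∀ v : ZMod 3 × ZMod 3,
          σ v = (Matrix.mulVec A.1 ![v.1, v.2] 0 + b.1,
                 Matrix.mulVec A.1 ![v.1, v.2] 1 + b.2) := by
  exact flex_permutation_induced_iff_saff_general hε σ
end

section
/- For g ∈ GL₃(ℂ), the following are equivalent: (i) g permutes the nine points projectively, i.e., for every (i,j) ∈ 𝔽₃ × 𝔽₃ there exist (k,m) ∈ 𝔽₃ × 𝔽₃ and c ∈ ℂ* with g·t_{i,j} = c·t_{k,m}; (ii) g permutes the twelve lines projectively, i.e., for each of the twelve listed linear forms l, the composite linear form l∘g (given by v ↦ l(g·v)) is a nonzero scalar multiple of one of the twelve forms. (This is the equality N_{PGL₃}(𝓕) = N_{PGL₃}(𝓛) of normalizers: the Hessian group preserves the twelve-line configuration.) -/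
/-!
The nine flexes and the twelve lines realise the points and lines of the affine plane `AG(2, 3)`
in the projective plane: for each of the twelve forms, the pairs `(i, j)` such that it vanishes at
`t_{i,j}` form an affine line over `𝔽₃`, and the four triangles are the four parallel classes.

A projectivity that permutes the flexes carries two flexes of a line to two other flexes, which
again span one of the twelve lines. Dually, a projectivity that permutes the lines carries the four
lines through a flex to four of the twelve lines; a parallel class has only three members, so two
of these four are not parallel and hence meet in a flex.
-/

open MvPolynomial

open Configuration Function Matrix Projectivization
open scoped LinearAlgebra.Projectivization

section Collineation

variable {P L : Type*} [Membership P L] [Nondegenerate P L] {φ : P → P} {ψ : L → L}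

/-- If `φ` permutes the points `a`, then `φ⁻¹` carries the `n` points on `b j` to `n` points on
`ψ (b j)`, two of which already span a line of the family. -/
theorem exists_line_map_eq_of_permutes_points {α β : Type*} [Finite α] {a : α → P} {b : β → L}
    (hφ : Injective φ) (hφψ : ∀ p l, φ p ∈ l ↔ p ∈ ψ l) (ha : Injective a) {n : ℕ}
    (hcard : ∀ j, ∃ s : Finset α, s.card = n ∧ ∀ i ∈ s, a i ∈ b j)
    (hjoin : ∀ s : Finset α, s.card = n →
      ∃ i ∈ s, ∃ i' ∈ s, i ≠ i' ∧ ∃ j, a i ∈ b j ∧ a i' ∈ b j)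
    (hperm : ∀ i, ∃ i', φ (a i) = a i') (j : β) : ∃ j', ψ (b j) = b j' := by
  choose σ hσ using hperm
  have σ_injective : Injective σ := fun i i' h ↦
    ha (hφ (by rw [hσ, hσ, h]))
  let e : α ≃ α := .ofBijective σ (Finite.injective_iff_bijective.mp σ_injective)
  obtain ⟨s, hs, hsj⟩ := hcard j
  have mem_ψ {i : α} (hi : i ∈ s.map e.symm.toEmbedding) : a i ∈ ψ (b j) := by
    rw [Finset.mem_map_equiv, Equiv.symm_symm] at hi
    rw [← hφψ, hσ]
    exact hsj _ hi
  obtain ⟨i, hi, i', hi', hne, j', hij', hi'j'⟩ :=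
    hjoin (s.map e.symm.toEmbedding) (by rw [Finset.card_map, hs])
  exact ⟨j', (Nondegenerate.eq_or_eq (mem_ψ hi) (mem_ψ hi') hij' hi'j').resolve_left (ha.ne hne)⟩

end Collineation

/-- The lines of the affine plane `F × F`. The slope is the direction, with `none` standing for the
vertical direction; the intercept of a vertical line is its abscissa. Storing the direction as a
component makes parallelism an equality. -/
@[ext]
structure AffineLine (F : Type*) where
  direction : Option F
  intercept : F
  deriving DecidableEq, Fintype

namespace AffineLine

variable {F : Type*} [Field F]

instance : Membership (F × F) (AffineLine F) where
  mem l p := match l.direction with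
    | none => p.1 = l.intercept
    | some s => p.2 = s * p.1 + l.intercept

@[simp]
theorem mem_vertical {p : F × F} {c : F} : p ∈ (⟨none, c⟩ : AffineLine F) ↔ p.1 = c := Iff.rfl

@[simp]
theorem mem_nonvertical {p : F × F} {s c : F} :
    p ∈ (⟨some s, c⟩ : AffineLine F) ↔ p.2 = s * p.1 + c := Iff.rfl

theorem exists_mem_of_direction (p : F × F) (d : Option F) :
    ∃ l : AffineLine F, l.direction = d ∧ p ∈ l := by
  cases d with
  | none => exact ⟨⟨none, p.1⟩, rfl, rfl⟩
  | some s => exact ⟨⟨some s, p.2 - s * p.1⟩, rfl, by simp⟩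

theorem exists_pair_mem (l : AffineLine F) : ∃ p q : F × F, p ≠ q ∧ p ∈ l ∧ q ∈ l := by
  obtain ⟨_ | s, c⟩ := l
  · exact ⟨(c, 0), (c, 1), by simp, by simp, by simp⟩
  · exact ⟨(0, c), (1, s + c), by simp, by simp, by simp⟩

theorem exists_line_through (p q : F × F) : ∃ l : AffineLine F, p ∈ l ∧ q ∈ l := by
  by_cases h : q.1 = p.1
  · exact ⟨⟨none, p.1⟩, rfl, h⟩
  · have h' : q.1 - p.1 ≠ 0 := sub_ne_zero.mpr h
    refine ⟨⟨some ((q.2 - p.2) / (q.1 - p.1)), p.2 - (q.2 - p.2) / (q.1 - p.1) * p.1⟩, ?_, ?_⟩ <;>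
      rw [mem_nonvertical]
    · ring
    · field_simp
      ring

theorem exists_mem_mem_of_direction_ne {l m : AffineLine F} (h : l.direction ≠ m.direction) :
    ∃ p : F × F, p ∈ l ∧ p ∈ m := by
  obtain ⟨_ | s, c⟩ := l <;> obtain ⟨_ | t, d⟩ := m
  · exact absurd rfl h
  · exact ⟨(c, t * c + d), by simp, by simp⟩
  · exact ⟨(d, s * d + c), by simp, by simp⟩
  · have hst : s - t ≠ 0 := sub_ne_zero.mpr fun hst ↦ h (congrArg some hst)
    refine ⟨((d - c) / (s - t), s * ((d - c) / (s - t)) + c), by simp, ?_⟩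
    rw [mem_nonvertical]
    field_simp
    ring

theorem point_ext {p q : F × F} (h : ∀ l : AffineLine F, p ∈ l ↔ q ∈ l) : p = q := by
  have hfst : q.1 = p.1 := (h ⟨none, p.1⟩).mp rfl
  have hsnd : q.2 = p.2 := by simpa using h ⟨some 0, p.2⟩
  exact Prod.ext hfst.symm hsnd.symm

theorem eq_of_forall_mem {l m : AffineLine F} (h : ∀ p ∈ l, p ∈ m) : l = m := by
  obtain ⟨_ | s, c⟩ := l <;> obtain ⟨_ | t, d⟩ := m
  · exact congrArg _ (mem_vertical.mp (h (c, 0) rfl))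
  · have h₀ : 0 = t * c + d := h (c, 0) rfl
    have h₁ : 1 = t * c + d := h (c, 1) rfl
    exact absurd (h₀.trans h₁.symm) zero_ne_one
  · have h₀ : 0 = d := h (0, c) (by simp)
    have h₁ : 1 = d := h (1, s + c) (by simp)
    exact absurd (h₀.trans h₁.symm) zero_ne_one
  · have hcd : c = d := by simpa using h (0, c) (by simp)
    have hst : s = t := by simpa [hcd] using h (1, s + c) (by simp)
    rw [hcd, hst]

theorem exists_finset_card_mem [Fintype F] (p : F × F) :
    ∃ s : Finset (AffineLine F), s.card = Fintype.card F + 1 ∧ ∀ l ∈ s, p ∈ l := by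
  choose line line_direction mem_line using exists_mem_of_direction p
  refine ⟨Finset.univ.map ⟨line, LeftInverse.injective line_direction⟩, ?_, by simpa using mem_line⟩
  rw [Finset.card_map, Finset.card_univ, Fintype.card_option]

theorem exists_ne_mem_mem_of_card_lt [Fintype F] {s : Finset (AffineLine F)}
    (hs : Fintype.card F < s.card) :
    ∃ l ∈ s, ∃ m ∈ s, l ≠ m ∧ ∃ p : F × F, p ∈ l ∧ p ∈ m := by
  obtain ⟨l, hl, m, hm, hne, hintercept⟩ :=
    Finset.exists_ne_map_eq_of_card_lt_of_maps_to (t := Finset.univ) hs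
      (f := intercept) (fun _ _ ↦ Finset.mem_univ _)
  have hdirection : l.direction ≠ m.direction := fun h ↦ hne (AffineLine.ext h hintercept)
  exact ⟨l, hl, m, hm, hne, exists_mem_mem_of_direction_ne hdirection⟩

/-- The converse direction is the dual one, counting lines through a point instead of points on a
line; there two members of the family need not meet in one, so a pair has to be found by the
pigeonhole principle. -/
theorem permutes_points_iff_permutes_lines [Finite F] {P L : Type*} [Membership P L]
    [Nondegenerate P L] {φ : P → P} {ψ : L → L} (hφ : Injective φ) (hψ : Injective ψ)
    (hφψ : ∀ p l, φ p ∈ l ↔ p ∈ ψ l) {a : F × F → P} {b : AffineLine F → L}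
    (hab : ∀ p l, a p ∈ b l ↔ p ∈ l) :
    (∀ p, ∃ q, φ (a p) = a q) ↔ ∀ l, ∃ m, ψ (b l) = b m := by
  have := Fintype.ofFinite F
  have ha : Injective a := fun p q h ↦ point_ext fun l ↦ by rw [← hab, ← hab, h]
  have hb : Injective b := fun l m h ↦ eq_of_forall_mem fun p ↦ by
    rw [← hab, ← hab, h]
    exact id
  constructor
  · refine exists_line_map_eq_of_permutes_points hφ hφψ ha (n := 2) (fun l ↦ ?_) (fun s hs ↦ ?_)
    · classical
      obtain ⟨p, q, hpq, hp, hq⟩ := exists_pair_mem l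
      exact ⟨{p, q}, Finset.card_pair hpq, by simp [hab, hp, hq]⟩
    · obtain ⟨p, hp, q, hq, hpq⟩ := Finset.one_lt_card.mp (hs.symm ▸ one_lt_two)
      simp_rw [hab]
      exact ⟨p, hp, q, hq, hpq, exists_line_through p q⟩
  · refine exists_line_map_eq_of_permutes_points (P := Dual L) (L := Dual P) hψ
      (fun l p ↦ (hφψ p l).symm) hb (n := Fintype.card F + 1) (fun p ↦ ?_) (fun s hs ↦ ?_)
    · obtain ⟨s, hs, hps⟩ := exists_finset_card_mem p
      exact ⟨s, hs, fun l hl ↦ (hab p l).mpr (hps l hl)⟩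
    · obtain ⟨l, hl, m, hm, hlm, p, hpl, hpm⟩ := exists_ne_mem_mem_of_card_lt (s := s) (by omega)
      exact ⟨l, hl, m, hm, hlm, p, (hab p l).mpr hpl, (hab p m).mpr hpm⟩

end AffineLine

section Projectivity

variable {K : Type*} [Field K]

theorem map_mk_eq_mk_iff_exists_smul {V W : Type*} [AddCommGroup V] [Module K V] [AddCommGroup W]
    [Module K W] {f : V →ₗ[K] W} (hf : Injective f) {v : V} {w : W} (hv : v ≠ 0) (hw : w ≠ 0) :
    map f hf (mk K v hv) = mk K w hw ↔ ∃ c : K, c ≠ 0 ∧ f v = c • w := by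
  rw [map_mk, mk_eq_mk_iff]
  exact ⟨fun ⟨c, hc⟩ ↦ ⟨c, c.ne_zero, hc.symm⟩, fun ⟨c, hc, h⟩ ↦ ⟨Units.mk0 c hc, h.symm⟩⟩

theorem orthogonal_map_mulVecLin_iff {m n : Type*} [Fintype m] [Fintype n] {A : Matrix m n K}
    (hA : Injective A.mulVecLin) (hA' : Injective A.vecMulLinear)
    (p : ℙ K (n → K)) (l : ℙ K (m → K)) :
    (map A.mulVecLin hA p).orthogonal l ↔ p.orthogonal (map A.vecMulLinear hA' l) := by
  induction p with | h v hv =>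
  induction l with | h w hw =>
  simp only [map_mk, orthogonal_mk, mulVecLin_apply, vecMulLinear_apply]
  rw [dotProduct_comm, dotProduct_mulVec, dotProduct_comm]

end Projectivity

section RootsOfUnity

variable {M : Type*} [CommMonoid M] {n : ℕ} [NeZero n] {ζ : M}

theorem pow_val_mul_pow_val (hζ : ζ ^ n = 1) (x y : ZMod n) :
    ζ ^ x.val * ζ ^ y.val = ζ ^ (x + y).val :=
  ((AddChar.zmodChar n hζ).map_add_eq_mul x y).symm

theorem pow_val_eq_pow_val_iff (hζ : IsPrimitiveRoot ζ n) {x y : ZMod n} :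
    ζ ^ x.val = ζ ^ y.val ↔ x = y :=
  ⟨fun h ↦ ZMod.val_injective n (hζ.pow_inj x.val_lt y.val_lt h), fun h ↦ h ▸ rfl⟩

end RootsOfUnity

namespace Hesse

variable {ε : ℂ}

/-- The form vanishing at the flexes `t_{i,j}` with `(i, j)` on the affine line `l` over `𝔽₃`.
For `j = s i + c` the exponents are found by solving for the vanishing at `t_{1,s+c}`
and `t_{2,2s+c}`. -/
noncomputable def affineForm (ε : ℂ) (l : AffineLine (ZMod 3)) : Fin 3 → ℂ :=
  match l.direction with
  | none => Pi.single ⟨l.intercept.val, ZMod.val_lt _⟩ 1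
  | some s => ![1, ε ^ (l.intercept - s).val, ε ^ (-(l.intercept + s)).val]

/-- The affine line over `𝔽₃` labelling the `k`-th of the twelve forms. The consecutive triples,
which are the triangles of the Hesse pencil, are the parallel classes. -/
def lineOfIndex : Fin 12 → AffineLine (ZMod 3) :=
  ![⟨none, 0⟩, ⟨none, 1⟩, ⟨none, 2⟩, ⟨some 0, 0⟩, ⟨some 0, 1⟩, ⟨some 0, 2⟩,
    ⟨some 1, 1⟩, ⟨some 1, 2⟩, ⟨some 1, 0⟩, ⟨some 2, 2⟩, ⟨some 2, 0⟩, ⟨some 2, 1⟩]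

theorem lineOfIndex_surjective : Surjective lineOfIndex := by
  rintro ⟨d, c⟩
  decide +revert

theorem lform_eq_affineForm (k : Fin 12) : lform ε k = affineForm ε (lineOfIndex k) := by
  funext i
  fin_cases k <;> fin_cases i <;>
    first | rfl | exact (pow_zero ε).symm | exact (pow_one ε).symm

theorem tpt_zero (j : ZMod 3) : tpt ε (0, j) = ![0, -ε ^ j.val, 1] := rfl

theorem tpt_one (j : ZMod 3) : tpt ε (1, j) = ![1, 0, -ε ^ j.val] := rfl

theorem tpt_two (j : ZMod 3) : tpt ε (2, j) = ![-ε ^ j.val, 1, 0] := rfl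

theorem eq_zero_or_one_or_two (i : ZMod 3) : i = 0 ∨ i = 1 ∨ i = 2 := by decide +revert

theorem tpt_ne_zero (p : ZMod 3 × ZMod 3) : tpt ε p ≠ 0 := by
  obtain ⟨i, j⟩ := p
  obtain rfl | rfl | rfl := eq_zero_or_one_or_two i <;> simp [tpt_zero, tpt_one, tpt_two]

theorem affineForm_ne_zero (l : AffineLine (ZMod 3)) : affineForm ε l ≠ 0 := by
  obtain ⟨_ | s, c⟩ := l <;> simp [affineForm]

theorem tpt_apply_eq_zero_iff (hε : ε ≠ 0) (i j c : ZMod 3) :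
    tpt ε (i, j) ⟨c.val, ZMod.val_lt c⟩ = 0 ↔ i = c := by
  obtain rfl | rfl | rfl := eq_zero_or_one_or_two i <;>
    obtain rfl | rfl | rfl := eq_zero_or_one_or_two c <;>
    first
    | exact iff_of_true rfl rfl
    | exact iff_of_false one_ne_zero (by decide)
    | exact iff_of_false (neg_ne_zero.mpr (pow_ne_zero _ hε)) (by decide)

theorem tpt_dotProduct_affineForm_eq_zero_iff (hε : IsPrimitiveRoot ε 3) (p : ZMod 3 × ZMod 3)
    (l : AffineLine (ZMod 3)) : tpt ε p ⬝ᵥ affineForm ε l = 0 ↔ p ∈ l := by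
  obtain ⟨i, j⟩ := p
  obtain ⟨_ | s, c⟩ := l
  · simpa [affineForm] using tpt_apply_eq_zero_iff (hε.ne_zero three_ne_zero) i j c
  · rw [AffineLine.mem_nonvertical]
    obtain rfl | rfl | rfl := eq_zero_or_one_or_two i
    · calc
        tpt ε (0, j) ⬝ᵥ affineForm ε ⟨some s, c⟩ = 0
        _ ↔ ε ^ j.val * ε ^ (c - s).val = ε ^ (-(c + s)).val := by
          simp [tpt_zero, affineForm, dotProduct, Fin.sum_univ_three, neg_add_eq_zero]
        _ ↔ j + (c - s) = -(c + s) := by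
          rw [pow_val_mul_pow_val hε.pow_eq_one, pow_val_eq_pow_val_iff hε]
        _ ↔ j = s * 0 + c := by decide +revert
    · calc
        tpt ε (1, j) ⬝ᵥ affineForm ε ⟨some s, c⟩ = 0
        _ ↔ ε ^ (0 : ZMod 3).val = ε ^ j.val * ε ^ (-(c + s)).val := by
          simp [tpt_one, affineForm, dotProduct, Fin.sum_univ_three, add_neg_eq_zero]
        _ ↔ 0 = j + -(c + s) := by
          rw [pow_val_mul_pow_val hε.pow_eq_one, pow_val_eq_pow_val_iff hε]
        _ ↔ j = s * 1 + c := by decide +revert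
    · calc
        tpt ε (2, j) ⬝ᵥ affineForm ε ⟨some s, c⟩ = 0
        _ ↔ ε ^ j.val = ε ^ (c - s).val := by
          simp [tpt_two, affineForm, dotProduct, Fin.sum_univ_three, neg_add_eq_zero]
        _ ↔ j = c - s := pow_val_eq_pow_val_iff hε
        _ ↔ j = s * 2 + c := by decide +revert

end Hesse

open Hesse in
/-- `g ∈ GL₃(ℂ)` permutes the nine flexes projectively iff it permutes the twelve lines of
the Hesse configuration projectively (the form `l∘g : v ↦ l(g·v)` has coefficient vector
`l ᵥ* g`): `N_{PGL₃}(𝓕) = N_{PGL₃}(𝓛)`. -/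
theorem permutes_flexes_iff_permutes_lines (ε : ℂ) (hε : IsPrimitiveRoot ε 3)
    (g : Matrix.GeneralLinearGroup (Fin 3) ℂ) :
    (∀ ij : ZMod 3 × ZMod 3, ∃ (km : ZMod 3 × ZMod 3) (c : ℂ), c ≠ 0 ∧
        Matrix.mulVec (g : Matrix (Fin 3) (Fin 3) ℂ) (tpt ε ij) = c • tpt ε km) ↔
      ∀ k : Fin 12, ∃ (m : Fin 12) (c : ℂ), c ≠ 0 ∧
        Matrix.vecMul (lform ε k) (g : Matrix (Fin 3) (Fin 3) ℂ) = c • lform ε m := by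
  let A : Matrix (Fin 3) (Fin 3) ℂ := g.val
  have hA : Injective A.mulVecLin := mulVec_injective_of_isUnit g.isUnit
  have hA' : Injective A.vecMulLinear := vecMul_injective_of_isUnit g.isUnit
  have hequiv := AffineLine.permutes_points_iff_permutes_lines
    (map_injective _ hA) (map_injective _ hA') (orthogonal_map_mulVecLin_iff hA hA')
    (a := fun p ↦ mk ℂ (tpt ε p) (tpt_ne_zero p))
    (b := fun l ↦ mk ℂ (affineForm ε l) (affineForm_ne_zero l))
    (tpt_dotProduct_affineForm_eq_zero_iff hε)
  simp only [map_mk_eq_mk_iff_exists_smul, mulVecLin_apply, vecMulLinear_apply] at hequiv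
  simpa only [lineOfIndex_surjective.forall, lineOfIndex_surjective.exists,
    ← lform_eq_affineForm] using hequiv
end
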